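/- Let ρ̄, μ̂, p̂ > 0 be constants and k ∈ {0,1,2,3,4}. There exist constants κ > 0 and C > 0 such that for every smooth M : ℝ² → ℝ with ∑_{j=0}^{9} ∫_{ℝ²} |∇^j M|² dx' ≤ κ², with Ω := {x∈ℝ³ : x₁ > M(x₂,x₃)}, and for every pair u : closure(Ω) → ℝ³ of class C^{k+2}, p : closure(Ω) → ℝ of class C^{k+1} with ∫_Ω|∇^j u|² dx < ∞ for 0 ≤ j ≤ k+2, ∫_Ω|∇^j p|² dx < ∞ for 0 ≤ j ≤ k+1, h := ρ̄ div u with ‖h‖_{H^{k+1}(Ω)} < ∞, g := −μ̂Δu + p̂∇p with ‖g‖_{H^{k}(Ω)} < ∞, u = 0 on ∂Ω and u(x) → 0 as |x| → ∞, one has ∫_Ω |∇^{k+2}u|² dx + ∫_Ω |∇^{k+1}p|² dx ≤ C ( ‖h‖²_{H^{k+1}(Ω)} + ‖g‖²_{H^{k}(Ω)} + ∫_Ω |∇u|² dx ), with C independent of M. -/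

import Mathlib

/- STATEMENT 10: uniform Cattabriga-type estimate for the Stokes system on
sufficiently flat perturbed half-spaces: the constant is independent of M
provided ‖M‖_{H⁹(ℝ²)} ≤ κ. -/

noncomputable section

open MeasureTheory Real Set Filter

abbrev E3 : Type := EuclideanSpace ℝ (Fin 3)
abbrev E2 : Type := EuclideanSpace ℝ (Fin 2)

/-- Projection on the tangential variables `x' = (x₂, x₃)`. -/
def proj2 (x : E3) : E2 := (WithLp.equiv 2 (Fin 2 → ℝ)).symm ![x 1, x 2]

/-- The perturbed half-space `Ω = {x : x₁ > M(x₂,x₃)}`. -/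
def Omg (M : E2 → ℝ) : Set E3 := {x : E3 | M (proj2 x) < x 0}

/-- The boundary point `(M(x'), x')` of `∂Ω` over `x' ∈ ℝ²`. -/
def gph (M : E2 → ℝ) (x' : E2) : E3 := (WithLp.equiv 2 (Fin 3 → ℝ)).symm ![M x', x' 0, x' 1]

/-- The vector in `ℝ³` with the given coordinates. -/
def vecE3 (v : Fin 3 → ℝ) : E3 := (WithLp.equiv 2 (Fin 3 → ℝ)).symm v

/-- Partial derivative `∂ᵢf`. -/
def pd (i : Fin 3) (f : E3 → ℝ) (x : E3) : ℝ := fderiv ℝ f x (EuclideanSpace.single i 1)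

/-- Divergence `div u = ∑ᵢ ∂ᵢuᵢ`. -/
def vdiv (u : E3 → E3) (x : E3) : ℝ := ∑ i, pd i (fun y => u y i) x

/-- Gradient `∇f`. -/
def grad (f : E3 → ℝ) (x : E3) : E3 := vecE3 fun i => pd i f x

/-- Componentwise Laplacian `Δu`. -/
def vlap (u : E3 → E3) (x : E3) : E3 := vecE3 fun i => ∑ j, pd j (pd j fun y => u y i) x

/-! ## Calculus on the closed half-space -/

/-- Closed half-space. -/
def Kc : Set E3 := {x | 0 ≤ x 0}
/-- Open half-space. -/
def Ho : Set E3 := {x | 0 < x 0}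

/-- Basis vector. -/
abbrev ee (i : Fin 3) : E3 := EuclideanSpace.single i (1:ℝ)

/-- Partial derivative within the closed half-space. -/
def P (i : Fin 3) (f : E3 → ℝ) : E3 → ℝ := fun x => fderivWithin ℝ f Kc x (ee i)

/-- Norm of the iterated derivative within the closed half-space. -/
def dn (n : ℕ) (f : E3 → ℝ) (x : E3) : ℝ := ‖iteratedFDerivWithin ℝ n f Kc x‖

lemma cont_coord (i : Fin 3) : Continuous (fun x : E3 => x i) := by fun_prop

lemma isOpen_Ho : IsOpen Ho := isOpen_lt continuous_const (cont_coord 0)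
lemma isClosed_Kc : IsClosed Kc := isClosed_le continuous_const (cont_coord 0)
lemma measSet_Ho : MeasurableSet Ho := isOpen_Ho.measurableSet
lemma mem_Kc {x : E3} : x ∈ Kc ↔ 0 ≤ x 0 := Iff.rfl
lemma mem_Ho {x : E3} : x ∈ Ho ↔ 0 < x 0 := Iff.rfl
lemma Ho_sub : Ho ⊆ Kc := fun _ hx => mem_Kc.2 (le_of_lt (mem_Ho.1 hx))
lemma Kc_mem_nhds {x : E3} (hx : x ∈ Ho) : Kc ∈ nhds x :=
  mem_of_superset (isOpen_Ho.mem_nhds hx) Ho_sub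
lemma Ho_sub_int : Ho ⊆ interior Kc := interior_maximal Ho_sub isOpen_Ho
lemma convex_Kc : Convex ℝ Kc := by
  intro x hx y hy a b ha hb _
  simp only [mem_Kc] at *
  simp only [PiLp.add_apply, PiLp.smul_apply, smul_eq_mul]
  positivity
lemma ud : UniqueDiffOn ℝ Kc := by
  refine uniqueDiffOn_convex convex_Kc ⟨ee 0, Ho_sub_int ?_⟩
  simp [Ho]

lemma dn_nonneg (n : ℕ) (f : E3 → ℝ) (x : E3) : 0 ≤ dn n f x := norm_nonneg _

lemma dn_eq {n : ℕ} {f : E3 → ℝ} {x : E3} (hx : x ∈ Ho) :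
    dn n f x = ‖iteratedFDeriv ℝ n f x‖ := by
  unfold dn
  rw [← iteratedFDerivWithin_univ]
  congr 1
  apply iteratedFDerivWithin_congr_set
  filter_upwards [isOpen_Ho.mem_nhds hx] with y hy
  exact propext ⟨fun _ => trivial, fun _ => Ho_sub hy⟩

lemma P_eq {i : Fin 3} {f : E3 → ℝ} {x : E3} (hx : x ∈ Ho) : P i f x = pd i f x := by
  unfold P pd
  rw [fderivWithin_of_mem_nhds (Kc_mem_nhds hx)]

lemma dn_zero (f : E3 → ℝ) (x : E3) : dn 0 f x = |f x| := by
  simp [dn]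

lemma dn_congr {n : ℕ} {f g : E3 → ℝ} (h : ∀ x ∈ Ho, f x = g x) {x : E3} (hx : x ∈ Ho) :
    dn n f x = dn n g x := by
  unfold dn
  rw [Filter.EventuallyEq.iteratedFDerivWithin_eq _ (h x hx)]
  apply Filter.Eventually.filter_mono nhdsWithin_le_nhds
  filter_upwards [isOpen_Ho.mem_nhds hx] with y hy using h y hy

lemma P_congr {i : Fin 3} {f g : E3 → ℝ} (h : ∀ x ∈ Ho, f x = g x) :
    ∀ x ∈ Ho, P i f x = P i g x := by
  intro x hx
  unfold P
  rw [Filter.EventuallyEq.fderivWithin_eq _ (h x hx)]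
  apply Filter.Eventually.filter_mono nhdsWithin_le_nhds
  filter_upwards [isOpen_Ho.mem_nhds hx] with y hy using h y hy

lemma P_contDiffOn {n : ℕ} {f : E3 → ℝ} (i : Fin 3) (hf : ContDiffOn ℝ ((n + 1 : ℕ)) f Kc) :
    ContDiffOn ℝ n (P i f) Kc := by
  have := hf.fderivWithin (m := n) ud (by push_cast; rfl)
  exact this.clm_apply contDiffOn_const

lemma ee_norm (i : Fin 3) : ‖ee i‖ = 1 := by simp [ee]

lemma dn_P_le {n : ℕ} {f : E3 → ℝ} (i : Fin 3) (hf : ContDiffOn ℝ ((n + 1 : ℕ)) f Kc)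
    {x : E3} (hx : x ∈ Kc) : dn n (P i f) x ≤ dn (n + 1) f x := by
  have h1 := hf.fderivWithin (m := n) ud (by push_cast; rfl)
  have := (ContinuousLinearMap.apply ℝ ℝ (ee i)).norm_iteratedFDerivWithin_comp_left
    (h1 x hx) ud hx (n := n) le_rfl
  rw [norm_iteratedFDerivWithin_fderivWithin ud hx] at this
  refine this.trans ?_
  have h2 : ‖ContinuousLinearMap.apply ℝ ℝ (ee i)‖ ≤ 1 := by
    refine ContinuousLinearMap.opNorm_le_bound _ zero_le_one fun g => ?_
    simpa [ee_norm] using g.le_opNorm (ee i)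
  calc _ ≤ 1 * ‖iteratedFDerivWithin ℝ (n+1) f Kc x‖ := by gcongr
    _ = _ := by rw [one_mul]; rfl

lemma clm_decomp (L : E3 →L[ℝ] ℝ) :
    L = ∑ i, (L (ee i)) • (EuclideanSpace.proj i : E3 →L[ℝ] ℝ) := by
  ext x
  have : x = ∑ i, x i • ee i := by
    ext j
    fin_cases j <;> simp [ee, Fin.sum_univ_three]
  conv_lhs => rw [this]
  simp [mul_comm]

lemma proj_norm_le (i : Fin 3) : ‖(EuclideanSpace.proj i : E3 →L[ℝ] ℝ)‖ ≤ 1 := by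
  refine ContinuousLinearMap.opNorm_le_bound _ zero_le_one fun x => ?_
  simpa using PiLp.norm_apply_le x i

lemma dn_succ_le {n : ℕ} {f : E3 → ℝ} (hf : ContDiffOn ℝ ((n + 1 : ℕ)) f Kc)
    {x : E3} (hx : x ∈ Kc) : dn (n + 1) f x ≤ ∑ i, dn n (P i f) x := by
  unfold dn
  rw [← norm_iteratedFDerivWithin_fderivWithin ud hx]
  let Lf : Fin 3 → (ℝ →L[ℝ] (E3 →L[ℝ] ℝ)) := fun i =>
    (ContinuousLinearMap.id ℝ ℝ).smulRight (EuclideanSpace.proj i : E3 →L[ℝ] ℝ)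
  have e : fderivWithin ℝ f Kc = ∑ i, (Lf i ∘ P i f) := by
    funext y
    rw [Finset.sum_apply]
    conv_lhs => rw [clm_decomp (fderivWithin ℝ f Kc y)]
    rfl
  have hP : ∀ i, ContDiffOn ℝ n (P i f) Kc := fun i => P_contDiffOn i hf
  rw [e, iteratedFDerivWithin_sum_apply ud hx
    (fun i _ => ((Lf i).contDiff.comp_contDiffOn (hP i)) x hx)]
  refine (norm_sum_le _ _).trans (Finset.sum_le_sum fun i _ => ?_)
  have := (Lf i).norm_iteratedFDerivWithin_comp_left (hP i x hx) ud hx (n := n) le_rfl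
  refine this.trans ?_
  have h2 : ‖Lf i‖ ≤ 1 := by
    refine ContinuousLinearMap.opNorm_le_bound _ zero_le_one fun t => ?_
    simp only [Lf, ContinuousLinearMap.smulRight_apply, ContinuousLinearMap.id_apply, norm_smul]
    nlinarith [proj_norm_le i, norm_nonneg t]
  calc _ ≤ 1 * ‖iteratedFDerivWithin ℝ n (P i f) Kc x‖ := by gcongr
    _ = _ := one_mul _

lemma P_comm {f : E3 → ℝ} (hf : ContDiffOn ℝ (2:ℕ) f Kc) (i j : Fin 3) :
    ∀ x ∈ Ho, P i (P j f) x = P j (P i f) x := by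
  intro x hx
  have hK := Ho_sub hx
  have hs := (hf x hK).isSymmSndFDerivWithinAt (by simp) ud
    (subset_closure (Ho_sub_int hx)) hK
  have hd : DifferentiableWithinAt ℝ (fderivWithin ℝ f Kc) Kc x :=
    ((hf.fderivWithin (m := 1) ud (by norm_num)).differentiableOn (by norm_num)) x hK
  have key : ∀ a b : Fin 3, P a (P b f) x
      = fderivWithin ℝ (fderivWithin ℝ f Kc) Kc x (ee a) (ee b) := by
    intro a b
    have := (hd.hasFDerivWithinAt.clm_apply (hasFDerivWithinAt_const (ee b) x Kc)).fderivWithin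
      (ud x hK)
    unfold P
    rw [this]
    simp
  rw [key, key]
  exact hs _ _

lemma P_add {i : Fin 3} {f g : E3 → ℝ} {x : E3} (hx : x ∈ Kc) (hf : ContDiffOn ℝ (1:ℕ) f Kc)
    (hg : ContDiffOn ℝ (1:ℕ) g Kc) : P i (fun y => f y + g y) x = P i f x + P i g x := by
  unfold P
  rw [fderivWithin_fun_add (ud x hx) (hf.differentiableOn (by norm_num) x hx)
    (hg.differentiableOn (by norm_num) x hx)]
  rfl

lemma P_sub {i : Fin 3} {f g : E3 → ℝ} {x : E3} (hx : x ∈ Kc) (hf : ContDiffOn ℝ (1:ℕ) f Kc)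
    (hg : ContDiffOn ℝ (1:ℕ) g Kc) : P i (fun y => f y - g y) x = P i f x - P i g x := by
  unfold P
  rw [fderivWithin_fun_sub (ud x hx) (hf.differentiableOn (by norm_num) x hx)
    (hg.differentiableOn (by norm_num) x hx)]
  rfl

lemma P_smul {i : Fin 3} {f : E3 → ℝ} {x : E3} (c : ℝ) (hx : x ∈ Kc)
    (hf : ContDiffOn ℝ (1:ℕ) f Kc) : P i (fun y => c * f y) x = c * P i f x := by
  unfold P
  rw [fderivWithin_const_mul (ud x hx) (hf.differentiableOn (by norm_num) x hx)]
  rfl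

lemma P_mul {i : Fin 3} {f g : E3 → ℝ} {x : E3} (hx : x ∈ Kc) (hf : ContDiffOn ℝ (1:ℕ) f Kc)
    (hg : ContDiffOn ℝ (1:ℕ) g Kc) :
    P i (fun y => f y * g y) x = f x * P i g x + g x * P i f x := by
  unfold P
  rw [fderivWithin_fun_mul (ud x hx) (hf.differentiableOn (by norm_num) x hx)
    (hg.differentiableOn (by norm_num) x hx)]
  rfl

lemma dn_add_le {n : ℕ} {f g : E3 → ℝ} (hf : ContDiffOn ℝ n f Kc) (hg : ContDiffOn ℝ n g Kc)
    {x : E3} (hx : x ∈ Kc) : dn n (fun y => f y + g y) x ≤ dn n f x + dn n g x := by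
  unfold dn
  have := iteratedFDerivWithin_add_apply (hf x hx) (hg x hx) ud hx
  change iteratedFDerivWithin ℝ n (fun y => f y + g y) Kc x = _ at this
  rw [this]
  exact norm_add_le _ _

lemma dn_smul {n : ℕ} {f : E3 → ℝ} (c : ℝ) (hf : ContDiffOn ℝ n f Kc)
    {x : E3} (hx : x ∈ Kc) : dn n (fun y => c * f y) x = |c| * dn n f x := by
  unfold dn
  have := iteratedFDerivWithin_const_smul_apply (a := c) (hf x hx) ud hx
  change iteratedFDerivWithin ℝ n (fun y => c * f y) Kc x = _ at this
  rw [this, norm_smul]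
  rfl

/-! ## The class of functions -/

/-- `C^n` up to the boundary with all derivatives square integrable. -/
def Reg (n : ℕ) (f : E3 → ℝ) : Prop :=
  ContDiffOn ℝ n f Kc ∧ ∀ j ≤ n, IntegrableOn (fun x => dn j f x ^ 2) Ho

/-- Squared homogeneous Sobolev seminorm. -/
def N (n : ℕ) (f : E3 → ℝ) : ℝ := ∫ x in Ho, dn n f x ^ 2

lemma N_nonneg (n : ℕ) (f : E3 → ℝ) : 0 ≤ N n f :=
  setIntegral_nonneg measSet_Ho fun _ _ => sq_nonneg _

lemma N_congr {n : ℕ} {f g : E3 → ℝ} (h : ∀ x ∈ Ho, f x = g x) : N n f = N n g := by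
  unfold N
  apply setIntegral_congr_fun measSet_Ho
  intro x hx
  simp only [dn_congr h hx]

lemma Reg.mono {n m : ℕ} {f : E3 → ℝ} (h : Reg n f) (hm : m ≤ n) : Reg m f :=
  ⟨h.1.of_le (by exact_mod_cast hm), fun j hj => h.2 j (hj.trans hm)⟩

lemma dn_cont {n j : ℕ} {f : E3 → ℝ} (hf : ContDiffOn ℝ n f Kc) (hj : j ≤ n) :
    ContinuousOn (dn j f) Kc :=
  (hf.continuousOn_iteratedFDerivWithin (by exact_mod_cast hj) ud).norm

lemma intOn_of_le {n j : ℕ} {f : E3 → ℝ} {g : E3 → ℝ} (hf : ContDiffOn ℝ n f Kc) (hj : j ≤ n)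
    (hg : IntegrableOn g Ho) (h : ∀ x ∈ Ho, dn j f x ^ 2 ≤ g x) :
    IntegrableOn (fun x => dn j f x ^ 2) Ho := by
  refine Integrable.mono' hg ?_ ?_
  · exact (((dn_cont hf hj).mono Ho_sub).pow 2).aestronglyMeasurable measSet_Ho
  · refine (ae_restrict_iff' measSet_Ho).2 (Eventually.of_forall fun x hx => ?_)
    rw [Real.norm_of_nonneg (sq_nonneg _)]
    exact h x hx

lemma Reg.P {n : ℕ} {f : E3 → ℝ} (h : Reg (n + 1) f) (i : Fin 3) : Reg n (P i f) := by
  refine ⟨P_contDiffOn i h.1, fun j hj => ?_⟩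
  refine intOn_of_le (P_contDiffOn i h.1) hj (h.2 (j + 1) (by omega)) fun x hx => ?_
  have := dn_P_le (n := j) i (h.1.of_le (by exact_mod_cast (by omega : j + 1 ≤ n + 1))) (Ho_sub hx)
  exact pow_le_pow_left₀ (dn_nonneg _ _ _) this 2

lemma Reg.add {n : ℕ} {f g : E3 → ℝ} (hf : Reg n f) (hg : Reg n g) :
    Reg n (fun x => f x + g x) := by
  have hc := hf.1.add hg.1
  refine ⟨hc, fun j hj => ?_⟩
  refine intOn_of_le hc hj (((hf.2 j hj).const_mul 2).add ((hg.2 j hj).const_mul 2)) fun x hx => ?_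
  have := dn_add_le (n := j) (hf.mono hj).1 (hg.mono hj).1 (Ho_sub hx)
  simp only [Pi.add_apply]
  nlinarith [dn_nonneg j (fun x => f x + g x) x, dn_nonneg j f x, dn_nonneg j g x,
    sq_nonneg (dn j f x - dn j g x)]

lemma Reg.smul {n : ℕ} {f : E3 → ℝ} (c : ℝ) (hf : Reg n f) :
    Reg n (fun x => c * f x) := by
  have hc : ContDiffOn ℝ n (fun x => c * f x) Kc := contDiffOn_const.mul hf.1
  refine ⟨hc, fun j hj => ?_⟩
  refine intOn_of_le hc hj ((hf.2 j hj).const_mul (c^2)) fun x hx => ?_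
  rw [dn_smul c (hf.mono hj).1 (Ho_sub hx), mul_pow, sq_abs]

lemma Reg.sub {n : ℕ} {f g : E3 → ℝ} (hf : Reg n f) (hg : Reg n g) :
    Reg n (fun x => f x - g x) := by
  have := hf.add (hg.smul (-1))
  simpa [sub_eq_add_neg] using this

lemma Reg.zero (n : ℕ) : Reg n (fun _ => 0) := by
  refine ⟨contDiffOn_const, fun j hj => ?_⟩
  refine intOn_of_le (n := n) (g := fun _ => 0) contDiffOn_const hj (by simp) fun x hx => ?_
  have := dn_smul (n := j) (f := fun _ => 0) 0 contDiffOn_const (Ho_sub hx)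
  simp at this
  simp [this]

lemma Reg.sum {n : ℕ} {f : Fin 3 → E3 → ℝ} (hf : ∀ i, Reg n (f i)) :
    Reg n (fun x => ∑ i, f i x) := by
  have := ((hf 0).add (hf 1)).add (hf 2)
  simpa [Fin.sum_univ_three] using this

lemma N_mono_of {n : ℕ} {f g : E3 → ℝ} (hg : IntegrableOn g Ho)
    (h : ∀ x ∈ Ho, dn n f x ^ 2 ≤ g x) : N n f ≤ ∫ x in Ho, g x := by
  refine integral_mono_of_nonneg (Eventually.of_forall fun _ => sq_nonneg _) hg ?_
  exact (ae_restrict_iff' measSet_Ho).2 (Eventually.of_forall fun x hx => h x hx)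

lemma N_add {n : ℕ} {f g : E3 → ℝ} (hf : Reg n f) (hg : Reg n g) :
    N n (fun x => f x + g x) ≤ 2 * N n f + 2 * N n g := by
  refine (N_mono_of (g := fun x => 2 * dn n f x ^ 2 + 2 * dn n g x ^ 2)
    (Integrable.fun_add ((hf.2 n le_rfl).const_mul 2) ((hg.2 n le_rfl).const_mul 2))
    fun x hx => ?_).trans ?_
  · have := dn_add_le (n := n) hf.1 hg.1 (Ho_sub hx)
    nlinarith [dn_nonneg n (fun x => f x + g x) x, dn_nonneg n f x, dn_nonneg n g x,
      sq_nonneg (dn n f x - dn n g x)]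
  · rw [integral_add ((hf.2 n le_rfl).const_mul 2) ((hg.2 n le_rfl).const_mul 2),
      integral_const_mul, integral_const_mul]
    rfl

lemma N_smul {n : ℕ} {f : E3 → ℝ} (c : ℝ) (hf : Reg n f) :
    N n (fun x => c * f x) = c ^ 2 * N n f := by
  unfold N
  rw [← integral_const_mul]
  apply setIntegral_congr_fun measSet_Ho
  intro x hx
  simp only
  rw [dn_smul c hf.1 (Ho_sub hx), mul_pow, sq_abs]

lemma N_sub {n : ℕ} {f g : E3 → ℝ} (hf : Reg n f) (hg : Reg n g) :
    N n (fun x => f x - g x) ≤ 2 * N n f + 2 * N n g := by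
  have := N_add hf (hg.smul (-1))
  rw [N_smul _ hg] at this
  simpa [sub_eq_add_neg] using this

lemma N_sum {n : ℕ} {f : Fin 3 → E3 → ℝ} (hf : ∀ i, Reg n (f i)) :
    N n (fun x => ∑ i, f i x) ≤ 4 * ∑ i, N n (f i) := by
  have h1 := N_add ((hf 0).add (hf 1)) (hf 2)
  have h2 := N_add (hf 0) (hf 1)
  simp only [Fin.sum_univ_three]
  have := N_nonneg n (f 2)
  linarith

lemma N_P {n : ℕ} {f : E3 → ℝ} (i : Fin 3) (hf : Reg (n + 1) f) : N n (P i f) ≤ N (n + 1) f :=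
  N_mono_of (hf.2 (n + 1) le_rfl) fun _ hx =>
    pow_le_pow_left₀ (dn_nonneg _ _ _) (dn_P_le i hf.1 (Ho_sub hx)) 2

lemma N_succ {n : ℕ} {f : E3 → ℝ} (hf : Reg (n + 1) f) : N (n + 1) f ≤ 3 * ∑ i, N n (P i f) := by
  have hi : ∀ i, IntegrableOn (fun x => dn n (_root_.P i f) x ^ 2) Ho :=
    fun i => (hf.P i).2 n le_rfl
  refine (N_mono_of (g := fun x => 3 * ∑ i, dn n (P i f) x ^ 2)
    ((integrable_finsetSum _ fun i _ => hi i).const_mul 3) fun x hx => ?_).trans ?_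
  · have h1 := dn_succ_le hf.1 (Ho_sub hx)
    have h2 := pow_le_pow_left₀ (dn_nonneg _ _ _) h1 2
    refine h2.trans ?_
    simp only [Fin.sum_univ_three]
    nlinarith [sq_nonneg (dn n (P 0 f) x - dn n (P 1 f) x),
      sq_nonneg (dn n (P 0 f) x - dn n (P 2 f) x), sq_nonneg (dn n (P 1 f) x - dn n (P 2 f) x)]
  · rw [integral_const_mul, integral_finsetSum _ fun i _ => hi i]
    rfl

/-! ## The commutation identity for Lipschitz functions -/

lemma dq_tendsto {a ψ : E3 → ℝ} {Ca Cp : NNReal} (ha : LipschitzWith Ca a)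
    (hψ : LipschitzWith Cp ψ) (hc : HasCompactSupport ψ) (v w : E3) :
    Tendsto (fun s : ℝ => ∫ x, (s⁻¹ * (a (x + s • v) - a x)) * (s⁻¹ * (ψ (x + s • w) - ψ x)))
      (nhdsWithin 0 {0}ᶜ) (nhds (∫ x, lineDeriv ℝ a x v * lineDeriv ℝ ψ x w)) := by
  set S := Metric.cthickening ‖w‖ (tsupport ψ)
  have hS : IsCompact S := IsCompact.cthickening hc
  set B : ℝ := Ca * ‖v‖ * (Cp * ‖w‖)
  refine tendsto_integral_filter_of_dominated_convergence (S.indicator fun _ => B) ?_ ?_ ?_ ?_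
  · refine Eventually.of_forall fun s => Continuous.aestronglyMeasurable ?_
    have := ha.continuous
    have := hψ.continuous
    fun_prop
  · have h1 : ∀ᶠ s : ℝ in nhdsWithin 0 {0}ᶜ, s ≠ 0 := eventually_mem_nhdsWithin
    have h2 : ∀ᶠ s : ℝ in nhdsWithin 0 {0}ᶜ, |s| < 1 := by
      apply Eventually.filter_mono nhdsWithin_le_nhds
      have := Metric.ball_mem_nhds (0:ℝ) one_pos
      filter_upwards [this] with s hs
      simpa using hs
    filter_upwards [h1, h2] with s hs0 hs1
    refine Eventually.of_forall fun x => ?_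
    by_cases hx : x ∈ S
    · rw [indicator_of_mem hx, norm_mul, norm_mul, norm_mul]
      have hsp : 0 < ‖s‖ := norm_pos_iff.2 hs0
      have e1 : ‖a (x + s • v) - a x‖ ≤ Ca * (‖s‖ * ‖v‖) := by
        have := ha.norm_sub_le (x + s • v) x
        simpa [norm_smul] using this
      have e2 : ‖ψ (x + s • w) - ψ x‖ ≤ Cp * (‖s‖ * ‖w‖) := by
        have := hψ.norm_sub_le (x + s • w) x
        simpa [norm_smul] using this
      have f1 : ‖s⁻¹‖ * ‖a (x + s • v) - a x‖ ≤ Ca * ‖v‖ := by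
        rw [norm_inv, inv_mul_le_iff₀ hsp]; linarith
      have f2 : ‖s⁻¹‖ * ‖ψ (x + s • w) - ψ x‖ ≤ Cp * ‖w‖ := by
        rw [norm_inv, inv_mul_le_iff₀ hsp]; linarith
      exact mul_le_mul f1 f2 (by positivity) (by positivity)
    · rw [indicator_of_notMem hx]
      have e1 : ψ x = 0 := by
        by_contra h
        exact hx (Metric.self_subset_cthickening _ (subset_tsupport _ h))
      have e2 : ψ (x + s • w) = 0 := by
        by_contra h
        apply hx
        refine Metric.mem_cthickening_of_dist_le x (x + s • w) _ _ (subset_tsupport _ h) ?_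
        simp only [dist_self_add_right, norm_smul]
        have : ‖s‖ ≤ 1 := hs1.le
        nlinarith [norm_nonneg w]
      simp [e1, e2]
  · exact (integrable_indicator_iff hS.measurableSet).2
      (integrableOn_const hS.measure_lt_top.ne)
  · filter_upwards [ha.ae_lineDifferentiableAt (μ := volume) v,
      hψ.ae_lineDifferentiableAt (μ := volume) w] with x hx1 hx2
    have t1 := hx1.hasLineDerivAt.tendsto_slope_zero
    have t2 := hx2.hasLineDerivAt.tendsto_slope_zero
    simp only [smul_eq_mul] at t1 t2
    exact t1.mul t2

lemma dq_symm {a ψ : E3 → ℝ} (ha : Continuous a) (hψ : Continuous ψ)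
    (hc : HasCompactSupport ψ) (v w : E3) :
    ∫ x, (a (x + v) - a x) * (ψ (x + w) - ψ x) = ∫ x, (a (x - w) - a x) * (ψ (x - v) - ψ x) := by
  have I : ∀ p q : E3, Integrable (fun x => a (x + p) * ψ (x + q)) := by
    intro p q
    refine Continuous.integrable_of_hasCompactSupport (by fun_prop) ?_
    exact (hc.comp_homeomorph (Homeomorph.addRight q)).mul_left
  have T : ∀ p q r : E3, ∫ x, a (x + p) * ψ (x + q) = ∫ x, a (x + (p + r)) * ψ (x + (q + r)) := by
    intro p q r
    rw [← integral_add_right_eq_self (fun x => a (x + p) * ψ (x + q)) r]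
    congr 1; funext x; congr 2 <;> abel
  have E : ∀ p q : E3, ∫ x, (a (x + p) - a x) * (ψ (x + q) - ψ x) =
      (∫ x, a (x + p) * ψ (x + q)) - (∫ x, a (x + p) * ψ (x + 0)) -
      (∫ x, a (x + 0) * ψ (x + q)) + ∫ x, a (x + 0) * ψ (x + 0) := by
    intro p q
    have I2 : Integrable (fun x => a (x + p) * ψ (x + q) - a (x + p) * ψ (x + 0)) :=
      (I p q).sub (I p 0)
    have I3 : Integrable (fun x => a (x + p) * ψ (x + q) - a (x + p) * ψ (x + 0) -
      a (x + 0) * ψ (x + q)) := I2.sub (I 0 q)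
    rw [← integral_sub (I _ _) (I _ _), ← integral_sub I2 (I _ _), ← integral_add I3 (I _ _)]
    congr 1; funext x
    simp only [add_zero]
    ring
  simp only [sub_eq_add_neg] at *
  rw [E v w, E (-w) (-v), T (-w) (-v) (w + v), T (-w) 0 w, T 0 (-v) v]
  have e1 : -w + (w + v) = v := by abel
  have e2 : -v + (w + v) = w := by abel
  rw [e1, e2]
  simp only [neg_add_cancel, zero_add]
  ring

lemma lip_symm {a ψ : E3 → ℝ} {Ca Cp : NNReal} (ha : LipschitzWith Ca a)
    (hψ : LipschitzWith Cp ψ) (hc : HasCompactSupport ψ) (v w : E3) :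
    ∫ x, lineDeriv ℝ a x v * lineDeriv ℝ ψ x w = ∫ x, lineDeriv ℝ a x w * lineDeriv ℝ ψ x v := by
  have t1 := dq_tendsto ha hψ hc v w
  have t2 := dq_tendsto ha hψ hc w v
  have hneg : Tendsto (fun s : ℝ => -s) (nhdsWithin 0 {0}ᶜ) (nhdsWithin 0 {0}ᶜ) := by
    refine tendsto_nhdsWithin_of_tendsto_nhds_of_eventually_within _ ?_ ?_
    · have : Tendsto (fun s : ℝ => -s) (nhds 0) (nhds (-0)) := (continuous_neg.tendsto 0)
      rw [neg_zero] at this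
      exact this.mono_left nhdsWithin_le_nhds
    · filter_upwards [self_mem_nhdsWithin] with s hs
      simpa using hs
  refine tendsto_nhds_unique t1 ((t2.comp hneg).congr fun s => ?_)
  have := dq_symm ha.continuous hψ.continuous hc (s • v) (s • w)
  simp only [Function.comp]
  have e : ∀ (b c : E3 → ℝ), (fun x => (s⁻¹ * b x) * (s⁻¹ * c x))
      = fun x => (s⁻¹ * s⁻¹) * (b x * c x) := by
    intro b c; funext x; ring
  have e' : ∀ (b c : E3 → ℝ), (fun x => ((-s)⁻¹ * b x) * ((-s)⁻¹ * c x))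
      = fun x => (s⁻¹ * s⁻¹) * (b x * c x) := by
    intro b c; funext x; rw [inv_neg]; ring
  rw [e, e', integral_const_mul, integral_const_mul, this]
  simp only [neg_smul, sub_eq_add_neg]

/-! ## Extension from the half-space -/

/-- Nearest point in the half-space. -/
def prK (x : E3) : E3 := x + (max (x 0) 0 - x 0) • ee 0

lemma prK_zero (x : E3) : prK x 0 = max (x 0) 0 := by simp [prK]
lemma prK_mem (x : E3) : prK x ∈ Kc := by rw [mem_Kc, prK_zero]; exact le_max_right _ _
lemma prK_of_mem {x : E3} (hx : x ∈ Kc) : prK x = x := by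
  rw [mem_Kc] at hx
  simp [prK, max_eq_left hx]
lemma prK_lip : LipschitzWith 3 prK := by
  refine LipschitzWith.of_dist_le_mul fun x y => ?_
  have h0 : |x 0 - y 0| ≤ ‖x - y‖ := by simpa using PiLp.norm_apply_le (x - y) 0
  have h1 : |max (x 0) 0 - max (y 0) 0| ≤ |x 0 - y 0| := abs_max_sub_max_le_abs _ _ _
  rw [dist_eq_norm, dist_eq_norm]
  have e : prK x - prK y = (x - y) +
      ((max (x 0) 0 - max (y 0) 0) - (x 0 - y 0)) • ee 0 := by
    simp only [prK]
    module
  rw [e]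
  refine (norm_add_le _ _).trans ?_
  rw [norm_smul, ee_norm, mul_one]
  have := abs_sub (max (x 0) 0 - max (y 0) 0) (x 0 - y 0)
  simp only [Real.norm_eq_abs, NNReal.coe_ofNat]
  linarith

lemma lipOn_of_support {f : E3 → ℝ} (hf : ContDiffOn ℝ (1:ℕ) f Kc) (hc : HasCompactSupport f) :
    ∃ C : NNReal, LipschitzOnWith C f Kc := by
  have hcont : ContinuousOn (fun x => ‖fderivWithin ℝ f Kc x‖) Kc :=
    (hf.continuousOn_fderivWithin ud (by norm_num)).norm
  have hcomp : IsCompact (Kc ∩ tsupport f) := hc.inter_left isClosed_Kc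
  obtain ⟨B, hB⟩ := (hcomp.bddAbove_image (hcont.mono inter_subset_left))
  refine ⟨(max B 0).toNNReal, ?_⟩
  refine Convex.lipschitzOnWith_of_nnnorm_fderivWithin_le
    (hf.differentiableOn (by norm_num)) (fun x hx => ?_) convex_Kc
  rw [← NNReal.coe_le_coe, coe_nnnorm, Real.coe_toNNReal _ (le_max_right _ _)]
  by_cases hxs : x ∈ tsupport f
  · exact (hB (mem_image_of_mem _ ⟨hx, hxs⟩)).trans (le_max_left _ _)
  · have : f =ᶠ[nhdsWithin x Kc] fun _ => (0:ℝ) := by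
      apply Eventually.filter_mono nhdsWithin_le_nhds
      filter_upwards [(isClosed_tsupport f).isOpen_compl.mem_nhds hxs] with y hy
      exact image_eq_zero_of_notMem_tsupport hy
    rw [this.fderivWithin_eq (image_eq_zero_of_notMem_tsupport hxs)]
    simp

lemma lineDeriv_ext {f : E3 → ℝ} (hf : ContDiffOn ℝ (1:ℕ) f Kc) {x : E3} (hx : x ∈ Ho)
    (i : Fin 3) : lineDeriv ℝ (f ∘ prK) x (ee i) = P i f x := by
  have h : (f ∘ prK) =ᶠ[nhds x] f := by
    filter_upwards [isOpen_Ho.mem_nhds hx] with y hy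
    simp [prK_of_mem (Ho_sub hy)]
  rw [h.lineDeriv_eq]
  have hd : DifferentiableAt ℝ f x :=
    (hf.differentiableOn (by norm_num) x (Ho_sub hx)).differentiableAt (Kc_mem_nhds hx)
  rw [hd.lineDeriv_eq_fderiv, P_eq hx]
  rfl

lemma bdry_null : volume {x : E3 | x 0 = 0} = 0 := by
  have h := Measure.addHaar_submodule (volume : Measure E3)
    (LinearMap.ker (EuclideanSpace.proj 0 : E3 →L[ℝ] ℝ).toLinearMap) ?_
  · refine measure_mono_null (fun x hx => ?_) h
    simpa using hx
  · intro h
    have : ee 0 ∈ LinearMap.ker (EuclideanSpace.proj 0 : E3 →L[ℝ] ℝ).toLinearMap := by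
      rw [h]; trivial
    simp at this

lemma cpt_symm {a ψ : E3 → ℝ} (ha : ContDiffOn ℝ (1:ℕ) a Kc) (hac : HasCompactSupport a)
    (hψ : ContDiffOn ℝ (1:ℕ) ψ Kc) (hc : HasCompactSupport ψ) (h0 : ∀ x : E3, x 0 = 0 → ψ x = 0)
    (i j : Fin 3) :
    ∫ x in Ho, P i a x * P j ψ x = ∫ x in Ho, P j a x * P i ψ x := by
  obtain ⟨Ca, hCa⟩ := lipOn_of_support ha hac
  obtain ⟨Cp, hCp⟩ := lipOn_of_support hψ hc
  have la : LipschitzWith (Ca * 3) (a ∘ prK) := by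
    rw [← lipschitzOnWith_univ] at *
    exact hCa.comp (lipschitzOnWith_univ.2 prK_lip) (fun x _ => prK_mem x)
  have lp : LipschitzWith (Cp * 3) (ψ ∘ prK) := by
    rw [← lipschitzOnWith_univ] at *
    exact hCp.comp (lipschitzOnWith_univ.2 prK_lip) (fun x _ => prK_mem x)
  have z : ∀ x : E3, x 0 ≤ 0 → (ψ ∘ prK) x = 0 := fun x hx => h0 _ (by
    rw [prK_zero, max_eq_right hx])
  have hcs : HasCompactSupport (ψ ∘ prK) := by
    refine hc.mono fun x hx => ?_
    have hx0 : 0 < x 0 := by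
      by_contra h
      exact hx (z x (not_lt.1 h))
    have : prK x = x := prK_of_mem (mem_Kc.2 hx0.le)
    simpa [Function.mem_support, this] using hx
  have key : ∀ i j : Fin 3, ∫ x, lineDeriv ℝ (a ∘ prK) x (ee i) * lineDeriv ℝ (ψ ∘ prK) x (ee j)
      = ∫ x in Ho, P i a x * P j ψ x := by
    intro i j
    rw [← setIntegral_eq_integral_of_ae_compl_eq_zero (s := Ho)]
    · apply setIntegral_congr_fun measSet_Ho
      intro x hx
      simp only [lineDeriv_ext ha hx, lineDeriv_ext hψ hx]
    · have hn : ∀ᵐ x : E3, x 0 ≠ 0 := by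
        rw [ae_iff]; simpa using bdry_null
      filter_upwards [hn] with x hx0 hx
      have hlt : x 0 < 0 := lt_of_le_of_ne (not_lt.1 fun h => hx (mem_Ho.2 h)) hx0
      have : (ψ ∘ prK) =ᶠ[nhds x] fun _ => (0:ℝ) := by
        filter_upwards [(isOpen_lt (cont_coord 0) continuous_const).mem_nhds hlt] with y hy
        exact z y (le_of_lt hy)
      rw [this.lineDeriv_eq]
      simp [lineDeriv]
  rw [← key, ← key]
  exact lip_symm la lp hcs _ _

/-! ## The commutation identity for the class `Reg 1` -/

lemma Reg.int_sq {f : E3 → ℝ} (h : Reg 0 f) : IntegrableOn (fun x => f x ^ 2) Ho := by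
  have := h.2 0 le_rfl
  simpa [dn_zero] using this

lemma Reg.contOn {n : ℕ} {f : E3 → ℝ} (h : Reg n f) : ContinuousOn f Ho :=
  h.1.continuousOn.mono Ho_sub

lemma N_zero {f : E3 → ℝ} : N 0 f = ∫ x in Ho, f x ^ 2 := by
  unfold N; simp [dn_zero]

lemma int_mul {f g : E3 → ℝ} (hf : Reg 0 f) (hg : Reg 0 g) :
    IntegrableOn (fun x => f x * g x) Ho := by
  refine Integrable.mono' (hf.int_sq.fun_add hg.int_sq) ?_ (Eventually.of_forall fun x => ?_)
  · exact (hf.contOn.mul hg.contOn).aestronglyMeasurable measSet_Ho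
  · rw [Real.norm_eq_abs, abs_le]
    constructor <;> nlinarith [sq_nonneg (f x + g x), sq_nonneg (f x - g x)]

/-- A fixed bump function. -/
def bmp : ContDiffBump (0 : E3) := ⟨1, 2, one_pos, one_lt_two⟩
/-- Cut-off functions. -/
def cut (n : ℕ) (x : E3) : ℝ := bmp (((n:ℝ) + 1)⁻¹ • x)

lemma cut_contDiff (n : ℕ) : ContDiff ℝ (1:ℕ) (cut n) :=
  bmp.contDiff.comp (contDiff_const_smul (((n:ℝ) + 1)⁻¹))

lemma cut_support (n : ℕ) : HasCompactSupport (cut n) := by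
  have h := bmp.hasCompactSupport
  exact h.comp_smul (by positivity)

lemma cut_abs (n : ℕ) (x : E3) : |cut n x| ≤ 1 := by
  unfold cut
  rw [abs_of_nonneg bmp.nonneg]
  exact bmp.le_one

lemma scale_tendsto : Tendsto (fun n : ℕ => ((n:ℝ) + 1)⁻¹) atTop (nhds 0) := by
  simpa using (tendsto_one_div_add_atTop_nhds_zero_nat (𝕜 := ℝ))

lemma cut_tendsto (x : E3) : Tendsto (fun n => cut n x) atTop (nhds 1) := by
  have h1 : Tendsto (fun n : ℕ => ((n:ℝ) + 1)⁻¹ • x) atTop (nhds ((0:ℝ) • x)) :=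
    scale_tendsto.smul_const x
  rw [zero_smul] at h1
  have h2 := (bmp.continuous.tendsto (0:E3)).comp h1
  have h3 : bmp (0:E3) = 1 := bmp.one_of_mem_closedBall (by simp [bmp])
  rw [h3] at h2
  exact h2

lemma bmp_deriv : ∃ B : ℝ, 0 ≤ B ∧ ∀ x, ‖fderiv ℝ (bmp : E3 → ℝ) x‖ ≤ B := by
  have hc : Continuous (fderiv ℝ (bmp : E3 → ℝ)) :=
    (bmp.contDiff (n := 1)).continuous_fderiv (by norm_num)
  obtain ⟨B, hB⟩ := (bmp.hasCompactSupport.fderiv (𝕜 := ℝ)).exists_bound_of_continuous hc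
  exact ⟨B, (norm_nonneg _).trans (hB 0), hB⟩

lemma cut_P : ∃ B : ℝ, 0 ≤ B ∧ ∀ n (i : Fin 3), ∀ x ∈ Ho, |P i (cut n) x| ≤ ((n:ℝ) + 1)⁻¹ * B := by
  obtain ⟨B, hB0, hB⟩ := bmp_deriv
  refine ⟨B, hB0, fun n i x hx => ?_⟩
  have hd : DifferentiableAt ℝ (bmp : E3 → ℝ) (((n:ℝ) + 1)⁻¹ • x) :=
    (bmp.contDiff (n := 1)).differentiable (by norm_num) _
  have h1 : HasFDerivAt (cut n) ((fderiv ℝ (bmp : E3 → ℝ) (((n:ℝ) + 1)⁻¹ • x)).comp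
      (((n:ℝ) + 1)⁻¹ • ContinuousLinearMap.id ℝ E3)) x :=
    hd.hasFDerivAt.comp x
      (((((n:ℝ) + 1)⁻¹ • ContinuousLinearMap.id ℝ E3).hasFDerivAt (x := x) :))
  rw [P_eq hx, pd, h1.fderiv]
  have h2 := (fderiv ℝ (bmp : E3 → ℝ) (((n:ℝ) + 1)⁻¹ • x)).le_opNorm (ee i)
  rw [ee_norm, mul_one] at h2
  have h3 := h2.trans (hB _)
  simp only [ContinuousLinearMap.comp_apply, ContinuousLinearMap.smul_apply,
    ContinuousLinearMap.id_apply, map_smul, smul_eq_mul, abs_mul]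
  rw [abs_of_nonneg (by positivity : (0:ℝ) ≤ ((n:ℝ) + 1)⁻¹)]
  exact mul_le_mul_of_nonneg_left h3 (by positivity)

lemma cut_lim {a ψ : E3 → ℝ} (ha : Reg 1 a) (hψ : Reg 1 ψ) (i j : Fin 3) :
    Tendsto (fun n => ∫ x in Ho, P i (fun y => cut n y * a y) x * P j (fun y => cut n y * ψ y) x)
      atTop (nhds (∫ x in Ho, P i a x * P j ψ x)) := by
  obtain ⟨B, hB0, hB⟩ := cut_P
  have hcut : ∀ n, ContDiffOn ℝ (1:ℕ) (cut n) Kc := fun n => (cut_contDiff n).contDiffOn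
  have bd : ∀ (f : E3 → ℝ), Reg 1 f → ∀ n (i : Fin 3), ∀ x ∈ Ho,
      |P i (fun y => cut n y * f y) x| ≤ |P i f x| + B * |f x| := by
    intro f hf n i x hx
    rw [P_mul (Ho_sub hx) (hcut n) hf.1]
    refine (abs_add_le _ _).trans ?_
    rw [abs_mul, abs_mul]
    have h1 := cut_abs n x
    have h2 := hB n i x hx
    have h3 : ((n:ℝ) + 1)⁻¹ ≤ 1 := inv_le_one_of_one_le₀ (by linarith [Nat.cast_nonneg (α := ℝ) n])
    have h4 : ((n:ℝ) + 1)⁻¹ * B ≤ B := by nlinarith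
    nlinarith [abs_nonneg (P i f x), abs_nonneg (f x)]
  have lm : ∀ (f : E3 → ℝ), Reg 1 f → ∀ (i : Fin 3), ∀ x ∈ Ho,
      Tendsto (fun n => P i (fun y => cut n y * f y) x) atTop (nhds (P i f x)) := by
    intro f hf i x hx
    have h1 : Tendsto (fun n => P i (cut n) x) atTop (nhds 0) := by
      refine squeeze_zero_norm (a := fun n : ℕ => ((n:ℝ) + 1)⁻¹ * B) (fun n => hB n i x hx) ?_
      simpa using scale_tendsto.mul_const B
    have h2 := ((cut_tendsto x).mul_const (P i f x)).add (h1.const_mul (f x))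
    simp only [one_mul, mul_zero, add_zero] at h2
    refine h2.congr fun n => ?_
    rw [P_mul (Ho_sub hx) (hcut n) hf.1]
  refine tendsto_integral_of_dominated_convergence
    (fun x => (P i a x ^ 2 + B ^ 2 * a x ^ 2) + (P j ψ x ^ 2 + B ^ 2 * ψ x ^ 2)) ?_ ?_ ?_ ?_
  · intro n
    refine ContinuousOn.aestronglyMeasurable ?_ measSet_Ho
    exact ((P_contDiffOn (n := 0) i ((hcut n).mul ha.1)).continuousOn.mono Ho_sub).mul
      ((P_contDiffOn (n := 0) j ((hcut n).mul hψ.1)).continuousOn.mono Ho_sub)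
  · exact ((ha.P i).int_sq.fun_add ((ha.mono (Nat.zero_le _)).int_sq.const_mul _)).fun_add
      ((hψ.P j).int_sq.fun_add ((hψ.mono (Nat.zero_le _)).int_sq.const_mul _))
  · intro n
    refine (ae_restrict_iff' measSet_Ho).2 (Eventually.of_forall fun x hx => ?_)
    rw [norm_mul, Real.norm_eq_abs, Real.norm_eq_abs]
    have h1 := bd a ha n i x hx
    have h2 := bd ψ hψ n j x hx
    have h3 := mul_le_mul h1 h2 (abs_nonneg _) ((abs_nonneg _).trans h1)
    refine h3.trans ?_
    nlinarith [sq_nonneg (|P i a x| + B * |a x| - (|P j ψ x| + B * |ψ x|)),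
      sq_nonneg (|P i a x| - B * |a x|), sq_nonneg (|P j ψ x| - B * |ψ x|),
      sq_abs (P i a x), sq_abs (a x), sq_abs (P j ψ x), sq_abs (ψ x)]
  · exact (ae_restrict_iff' measSet_Ho).2 (Eventually.of_forall fun x hx =>
      (lm a ha i x hx).mul (lm ψ hψ j x hx))

theorem symm_id {a ψ : E3 → ℝ} (ha : Reg 1 a) (hψ : Reg 1 ψ)
    (h0 : ∀ x : E3, x 0 = 0 → ψ x = 0) (i j : Fin 3) :
    ∫ x in Ho, P i a x * P j ψ x = ∫ x in Ho, P j a x * P i ψ x := by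
  refine tendsto_nhds_unique (cut_lim ha hψ i j) ((cut_lim ha hψ j i).congr fun n => ?_)
  have hcut : ContDiffOn ℝ (1:ℕ) (cut n) Kc := (cut_contDiff n).contDiffOn
  refine (cpt_symm (hcut.mul ha.1) ?_ (hcut.mul hψ.1) ?_ ?_ i j).symm
  · exact (cut_support n).mul_right
  · exact (cut_support n).mul_right
  · intro x hx
    simp [h0 x hx]

/-- L2 pairing on the half-space. -/
def ip (f g : E3 → ℝ) : ℝ := ∫ x in Ho, f x * g x

lemma ip_congr {f f' g g' : E3 → ℝ} (h : ∀ x ∈ Ho, f x = f' x) (h' : ∀ x ∈ Ho, g x = g' x) :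
    ip f g = ip f' g' :=
  setIntegral_congr_fun measSet_Ho fun x hx => by simp only [h x hx, h' x hx]

lemma ip_comm (f g : E3 → ℝ) : ip f g = ip g f := by
  unfold ip; simp only [mul_comm]

lemma ip_self (f : E3 → ℝ) : ip f f = N 0 f := by
  rw [N_zero]; unfold ip; simp only [sq]

lemma ip_add {f g h : E3 → ℝ} (hf : Reg 0 f) (hg : Reg 0 g) (hh : Reg 0 h) :
    ip (fun x => f x + g x) h = ip f h + ip g h := by
  unfold ip
  rw [← integral_add (int_mul hf hh) (int_mul hg hh)]
  simp only [add_mul]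

lemma ip_smul (c : ℝ) (f h : E3 → ℝ) :
    ip (fun x => c * f x) h = c * ip f h := by
  unfold ip
  rw [← integral_const_mul]
  simp only [mul_assoc]

lemma ip_sub {f g h : E3 → ℝ} (hf : Reg 0 f) (hg : Reg 0 g) (hh : Reg 0 h) :
    ip (fun x => f x - g x) h = ip f h - ip g h := by
  unfold ip
  rw [← integral_sub (int_mul hf hh) (int_mul hg hh)]
  simp only [sub_mul]

lemma ip_sum {f : Fin 3 → E3 → ℝ} {h : E3 → ℝ} (hf : ∀ i, Reg 0 (f i)) (hh : Reg 0 h) :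
    ip (fun x => ∑ i, f i x) h = ∑ i, ip (f i) h := by
  unfold ip
  rw [← integral_finsetSum _ fun i _ => int_mul (hf i) hh]
  simp only [Finset.sum_mul]

lemma ip_young {f g : E3 → ℝ} (hf : Reg 0 f) (hg : Reg 0 g) {δ : ℝ} (hδ : 0 < δ) :
    |ip f g| ≤ δ * N 0 f + (4 * δ)⁻¹ * N 0 g := by
  have key : ∀ a b : ℝ, |a * b| ≤ δ * a ^ 2 + (4 * δ)⁻¹ * b ^ 2 := by
    intro a b
    have e1 : δ * a ^ 2 + (4 * δ)⁻¹ * b ^ 2 - a * b = (4 * δ)⁻¹ * (2 * δ * a - b) ^ 2 := by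
      field_simp; ring
    have e2 : δ * a ^ 2 + (4 * δ)⁻¹ * b ^ 2 + a * b = (4 * δ)⁻¹ * (2 * δ * a + b) ^ 2 := by
      field_simp; ring
    have p1 : 0 ≤ (4 * δ)⁻¹ * (2 * δ * a - b) ^ 2 := by positivity
    have p2 : 0 ≤ (4 * δ)⁻¹ * (2 * δ * a + b) ^ 2 := by positivity
    rw [abs_le]; constructor <;> linarith
  rw [N_zero, N_zero, ← integral_const_mul, ← integral_const_mul,
    ← integral_add (hf.int_sq.const_mul _) (hg.int_sq.const_mul _)]
  refine abs_integral_le_integral_abs.trans (integral_mono (int_mul hf hg).abs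
    ((hf.int_sq.const_mul _).add (hg.int_sq.const_mul _)) fun x => key _ _)

lemma P_tang_zero {f : E3 → ℝ} (hf : ContDiffOn ℝ (1:ℕ) f Kc) (h0 : ∀ x : E3, x 0 = 0 → f x = 0)
    {i : Fin 3} (hi : i ≠ 0) (x : E3) (hx : x 0 = 0) : P i f x = 0 := by
  have hK : x ∈ Kc := mem_Kc.2 hx.ge
  have h1 := (hf.differentiableOn (by norm_num) x hK).hasFDerivWithinAt
  have hc : HasDerivWithinAt (fun t : ℝ => x + t • ee i) (ee i) univ 0 := by
    have := ((hasDerivAt_id (0:ℝ)).smul_const (ee i)).const_add x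
    exact (by simpa using this : HasDerivAt (fun t : ℝ => x + t • ee i) (ee i) 0).hasDerivWithinAt
  have hz : ∀ t : ℝ, (x + t • ee i) 0 = 0 := by
    intro t
    simp [hx, hi.symm]
  have h2 : HasFDerivWithinAt f (fderivWithin ℝ f Kc x) Kc (x + (0:ℝ) • ee i) := by simpa using h1
  have h3 := h2.comp_hasDerivWithinAt (0:ℝ) hc (fun t _ => mem_Kc.2 (hz t).ge)
  have h4 : (f ∘ fun t : ℝ => x + t • ee i) = fun _ => 0 := funext fun t => h0 _ (hz t)
  rw [h4, hasDerivWithinAt_univ] at h3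
  exact h3.unique (hasDerivAt_const _ _)

/-- Divergence of a field given by components. -/
def Fd (v : Fin 3 → E3 → ℝ) : E3 → ℝ := fun x => ∑ i, P i (v i) x
/-- Laplacian. -/
def Lp3 (f : E3 → ℝ) : E3 → ℝ := fun x => ∑ j, P j (P j f) x
/-- Stokes operator. -/
def Gd (μ p : ℝ) (v : Fin 3 → E3 → ℝ) (q : E3 → ℝ) (i : Fin 3) : E3 → ℝ :=
  fun x => -μ * Lp3 (v i) x + p * P i q x

/-- Admissible pairs. -/
structure Adm (n : ℕ) (w : Fin 3 → E3 → ℝ) (r : E3 → ℝ) : Prop where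
  v : ∀ i, Reg (n + 2) (w i)
  q : Reg (n + 1) r
  b : ∀ i, ∀ x : E3, x 0 = 0 → w i x = 0

lemma Reg.Lp3 {n : ℕ} {f : E3 → ℝ} (h : Reg (n + 2) f) : Reg n (Lp3 f) :=
  Reg.sum fun j => (h.P j).P j

lemma Reg.Fd {n : ℕ} {v : Fin 3 → E3 → ℝ} (h : ∀ i, Reg (n + 1) (v i)) : Reg n (Fd v) :=
  Reg.sum fun j => (h j).P j

lemma Adm.F {n : ℕ} {v q} (h : Adm n v q) : Reg (n + 1) (Fd v) := Reg.Fd h.v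

lemma Adm.G {n : ℕ} {v q} (h : Adm n v q) (μ p : ℝ) (i : Fin 3) : Reg n (Gd μ p v q i) :=
  ((h.v i).Lp3.smul (-μ)).add ((h.q.P i).smul p)

lemma Adm.mono {n m : ℕ} {v q} (h : Adm n v q) (hm : m ≤ n) : Adm m v q :=
  ⟨fun i => (h.v i).mono (by omega), h.q.mono (by omega), h.b⟩

lemma P_sum {i : Fin 3} {f : Fin 3 → E3 → ℝ} {x : E3} (hx : x ∈ Kc)
    (hf : ∀ j, ContDiffOn ℝ (1:ℕ) (f j) Kc) :
    P i (fun y => ∑ j, f j y) x = ∑ j, P i (f j) x := by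
  simp only [Fin.sum_univ_three]
  rw [P_add hx ((hf 0).add (hf 1)) (hf 2), P_add hx (hf 0) (hf 1)]

lemma Reg.c1 {n : ℕ} {f : E3 → ℝ} (h : Reg (n+1) f) : ContDiffOn ℝ (1:ℕ) f Kc :=
  (h.mono (by omega : 1 ≤ n + 1)).1
lemma Reg.c2 {n : ℕ} {f : E3 → ℝ} (h : Reg (n+2) f) : ContDiffOn ℝ (2:ℕ) f Kc :=
  (h.mono (by omega : 2 ≤ n + 2)).1

lemma P_Fd {n : ℕ} {v : Fin 3 → E3 → ℝ} (h : ∀ i, Reg (n + 2) (v i)) (τ : Fin 3) :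
    ∀ x ∈ Ho, P τ (Fd v) x = Fd (fun i => P τ (v i)) x := by
  intro x hx
  unfold Fd
  rw [P_sum (Ho_sub hx) fun j => ((h j).P j).c1]
  exact Finset.sum_congr rfl fun j _ => P_comm (h j).c2 _ _ x hx

lemma P_Lp3 {n : ℕ} {f : E3 → ℝ} (h : Reg (n + 3) f) (τ : Fin 3) :
    ∀ x ∈ Ho, P τ (Lp3 f) x = Lp3 (P τ f) x := by
  intro x hx
  unfold Lp3
  rw [P_sum (Ho_sub hx) fun j => ((h.P j).P j).c1]
  refine Finset.sum_congr rfl fun j _ => ?_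
  rw [P_comm (h.P j).c2 _ _ x hx]
  exact P_congr (P_comm h.c2 _ _) x hx

lemma P_Gd {n : ℕ} {v q} (h : Adm (n + 1) v q) (μ p : ℝ) (τ i : Fin 3) :
    ∀ x ∈ Ho, P τ (Gd μ p v q i) x = Gd μ p (fun i => P τ (v i)) (P τ q) i x := by
  intro x hx
  unfold Gd
  have hL := (h.v i).Lp3
  have hq := h.q.P i
  rw [P_add (Ho_sub hx) (hL.smul _).c1 (hq.smul _).c1, P_smul _ (Ho_sub hx) hL.c1,
    P_smul _ (Ho_sub hx) hq.c1, P_Lp3 (h.v i) τ x hx, P_comm h.q.c2 _ _ x hx]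

lemma Adm.tang {n : ℕ} {v q} (h : Adm (n + 1) v q) {τ : Fin 3} (hτ : τ ≠ 0) :
    Adm n (fun i => P τ (v i)) (P τ q) :=
  ⟨fun i => (h.v i).P τ, h.q.P τ, fun i => P_tang_zero (h.v i).c1 (h.b i) hτ⟩

/-- Tangential quantity. -/
def Tq (n : ℕ) (v : Fin 3 → E3 → ℝ) : ℝ := ∑ i, (N (n + 1) (P 1 (v i)) + N (n + 1) (P 2 (v i)))

lemma Tq_nonneg (n : ℕ) (v) : 0 ≤ Tq n v := by
  unfold Tq; exact Finset.sum_nonneg fun i _ => add_nonneg (N_nonneg _ _) (N_nonneg _ _)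

lemma Tq_le {n : ℕ} {v q} (h : Adm n v q) (i j : Fin 3) {τ : Fin 3} (hτ : τ ≠ 0) :
    N n (P j (P τ (v i))) ≤ Tq n v := by
  refine (N_P j ((h.v i).P τ)).trans ?_
  have hs := Finset.single_le_sum (f := fun i => (N (n + 1) (P 1 (v i)) + N (n + 1) (P 2 (v i))))
    (fun i _ => add_nonneg (N_nonneg _ _) (N_nonneg _ _)) (Finset.mem_univ i)
  refine le_trans ?_ hs
  have n1 := N_nonneg (n+1) (P 1 (v i))
  have n2 := N_nonneg (n+1) (P 2 (v i))
  fin_cases τ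
  · exact absurd rfl hτ
  · simp; assumption
  · simp; assumption

lemma normal_v0 {n : ℕ} {v q} (h : Adm n v q) :
    N n (P 0 (P 0 (v 0))) ≤ 10 * (N (n + 1) (Fd v) + Tq n v) := by
  have e : ∀ x ∈ Ho, P 0 (P 0 (v 0)) x =
      P 0 (Fd v) x - (P 0 (P 1 (v 1)) x + P 0 (P 2 (v 2)) x) := by
    intro x hx
    unfold Fd
    rw [P_sum (Ho_sub hx) fun j => ((h.v j).P j).c1, Fin.sum_univ_three]; ring
  rw [N_congr e]
  have r1 := ((h.v 1).P 1).P 0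
  have r2 := ((h.v 2).P 2).P 0
  have b1 := N_sub (h.F.P 0) (r1.add r2)
  have b2 := N_add r1 r2
  have b3 := N_P 0 h.F
  have b4 := Tq_le h 1 0 (τ := 1) (by decide)
  have b5 := Tq_le h 2 0 (τ := 2) (by decide)
  have := N_nonneg (n+1) (Fd v)
  have := Tq_nonneg n v
  linarith

lemma normal_q {n : ℕ} {v q} (h : Adm n v q) (μ p : ℝ) :
    p ^ 2 * N n (P 0 q) ≤ 2 * N n (Gd μ p v q 0) + 100 * μ ^ 2 * (N (n + 1) (Fd v) + Tq n v) := by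
  have e : ∀ x ∈ Ho, p * P 0 q x = Gd μ p v q 0 x + μ * Lp3 (v 0) x := by
    intro x hx; unfold Gd; ring
  rw [← N_smul p (h.q.P 0), N_congr e]
  have b1 := N_add (h.G μ p 0) ((h.v 0).Lp3.smul μ)
  rw [N_smul _ (h.v 0).Lp3] at b1
  have b2 : N n (Lp3 (v 0)) ≤ 4 * ∑ j, N n (P j (P j (v 0))) := N_sum fun j => ((h.v 0).P j).P j
  rw [Fin.sum_univ_three] at b2
  have b3 := normal_v0 h
  have b4 := Tq_le h 0 1 (τ := 1) (by decide)
  have b5 := Tq_le h 0 2 (τ := 2) (by decide)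
  have b6 : N n (Lp3 (v 0)) ≤ 50 * (N (n + 1) (Fd v) + Tq n v) := by
    have := N_nonneg (n+1) (Fd v)
    have := N_nonneg n (P 1 (P 1 (v 0)))
    linarith
  nlinarith [sq_nonneg μ]

lemma normal_vt {n : ℕ} {v q} (h : Adm n v q) (μ p : ℝ) {τ : Fin 3} (hτ : τ ≠ 0) :
    μ ^ 2 * N n (P 0 (P 0 (v τ))) ≤ 20 * (N n (Gd μ p v q τ) + p ^ 2 * N n (P τ q)
      + μ ^ 2 * Tq n v) := by
  have e : ∀ x ∈ Ho, μ * P 0 (P 0 (v τ)) x =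
      (p * P τ q x - Gd μ p v q τ x) - μ * (P 1 (P 1 (v τ)) x + P 2 (P 2 (v τ)) x) := by
    intro x hx; unfold Gd Lp3; rw [Fin.sum_univ_three]; ring
  have r0 := ((h.v τ).P 0).P 0
  have r1 := ((h.v τ).P 1).P 1
  have r2 := ((h.v τ).P 2).P 2
  rw [← N_smul μ r0, N_congr e]
  have b1 := N_sub (((h.q.P τ).smul p).sub (h.G μ p τ)) ((r1.add r2).smul μ)
  rw [N_smul _ (r1.add r2)] at b1
  have b2 := N_sub ((h.q.P τ).smul p) (h.G μ p τ)
  rw [N_smul _ (h.q.P τ)] at b2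
  have b3 := N_add r1 r2
  have b4 := Tq_le h τ 1 (τ := 1) (by decide)
  have b5 := Tq_le h τ 2 (τ := 2) (by decide)
  have b6 : N n (fun x => P 1 (P 1 (v τ)) x + P 2 (P 2 (v τ)) x) ≤ 4 * Tq n v := by linarith
  have := N_nonneg n (Gd μ p v q τ)
  have := mul_nonneg (sq_nonneg p) (N_nonneg n (P τ q))
  have b7 : 0 ≤ Tq n v := by unfold Tq; exact Finset.sum_nonneg fun i _ => add_nonneg (N_nonneg _ _) (N_nonneg _ _)
  nlinarith [sq_nonneg μ, mul_nonneg (sq_nonneg μ) b7, mul_le_mul_of_nonneg_left b6 (sq_nonneg μ)]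

/-- Full top-order quantity. -/
def An (n : ℕ) (v : Fin 3 → E3 → ℝ) (q : E3 → ℝ) : ℝ := ∑ i, N (n + 2) (v i) + N (n + 1) q
/-- Data quantity. -/
def Dn (μ p : ℝ) (n : ℕ) (v : Fin 3 → E3 → ℝ) (q : E3 → ℝ) : ℝ :=
  N (n + 1) (Fd v) + ∑ i, N n (Gd μ p v q i)

set_option maxHeartbeats 1000000 in
lemma completion {μ p : ℝ} (hμ : 0 < μ) (hp : 0 < p) : ∃ C : ℝ, 0 < C ∧ ∀ n v q, Adm n v q →
    An n v q ≤ C * (Dn μ p n v q + Tq n v + N n (P 1 q) + N n (P 2 q)) := by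
  have hm2 : 0 < μ^2 := by positivity
  have hp2 : 0 < p^2 := by positivity
  set R : ℝ := 1 + 1/μ^2 + 1/p^2 + p^2/μ^2 + μ^2/p^2 with hR
  refine ⟨10000 * R, by positivity, fun n v q h => ?_⟩
  set D := Dn μ p n v q + Tq n v + N n (P 1 q) + N n (P 2 q) with hD
  have nG := fun i => N_nonneg n (Gd μ p v q i)
  have nF := N_nonneg (n+1) (Fd v)
  have nT := Tq_nonneg n v
  have nq1 := N_nonneg n (P 1 q)
  have nq2 := N_nonneg n (P 2 q)
  have g0 := nG 0
  have g1 := nG 1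
  have g2 := nG 2
  have hDn : Dn μ p n v q = N (n + 1) (Fd v) + (N n (Gd μ p v q 0) + N n (Gd μ p v q 1)
    + N n (Gd μ p v q 2)) := by unfold Dn; rw [Fin.sum_univ_three]
  have hD0 : 0 ≤ D := by rw [hD, hDn]; linarith
  have hR1 : 1 ≤ R := by
    have : 0 ≤ 1/μ^2 + 1/p^2 + p^2/μ^2 + μ^2/p^2 := by positivity
    linarith
  have a0 : N n (P 0 (P 0 (v 0))) ≤ 10 * (R * D) := by
    have := normal_v0 h
    have : N n (P 0 (P 0 (v 0))) ≤ 10 * D := by rw [hD, hDn]; linarith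
    nlinarith
  have aq : N n (P 0 q) ≤ 100 * (R * D) := by
    have h1 := normal_q h μ p
    have h2 : p ^ 2 * N n (P 0 q) ≤ (2 + 100 * μ^2) * D := by
      rw [hD, hDn]; nlinarith
    have h3 : N n (P 0 q) ≤ (2 * (1/p^2) + 100 * (μ^2/p^2)) * D := by
      have : N n (P 0 q) = (p ^ 2 * N n (P 0 q)) / p^2 := by field_simp
      rw [this, div_le_iff₀ hp2]
      refine h2.trans (le_of_eq ?_); field_simp
    refine h3.trans ?_
    rw [← mul_assoc]
    refine mul_le_mul_of_nonneg_right ?_ hD0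
    have : 0 ≤ 1/μ^2 := by positivity
    have : 0 ≤ 1/p^2 := by positivity
    have : 0 ≤ p^2/μ^2 := by positivity
    linarith
  have av : ∀ τ : Fin 3, τ ≠ 0 → N n (Gd μ p v q τ) ≤ D → N n (P τ q) ≤ D → 
      N n (P 0 (P 0 (v τ))) ≤ 20 * (R * D) := by
    intro τ hτ h1 h2
    have h3 := normal_vt h μ p hτ
    have hT : Tq n v ≤ D := by rw [hD, hDn]; linarith
    have h4 : μ ^ 2 * N n (P 0 (P 0 (v τ))) ≤ (20 * (1 + p^2 + μ^2)) * D := by nlinarith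
    have h3 : N n (P 0 (P 0 (v τ))) ≤ (20 * (1/μ^2 + p^2/μ^2 + 1)) * D := by
      have : N n (P 0 (P 0 (v τ))) = (μ ^ 2 * N n (P 0 (P 0 (v τ)))) / μ^2 := by field_simp
      rw [this, div_le_iff₀ hm2]
      refine h4.trans (le_of_eq ?_); field_simp
    refine h3.trans ?_
    rw [← mul_assoc]
    refine mul_le_mul_of_nonneg_right ?_ hD0
    have : 0 ≤ 1/p^2 := by positivity
    have : 0 ≤ μ^2/p^2 := by positivity
    linarith
  have a1 := av 1 (by decide) (by rw [hD, hDn]; linarith) (by rw [hD, hDn]; linarith)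
  have a2 := av 2 (by decide) (by rw [hD, hDn]; linarith) (by rw [hD, hDn]; linarith)
  have hRD : D ≤ R * D := by nlinarith
  have aa : ∀ i, N n (P 0 (P 0 (v i))) ≤ 20 * (R * D) := by
    intro i; fin_cases i
    · exact a0.trans (by nlinarith)
    · exact a1
    · exact a2
  have tt : Tq n v ≤ R * D := le_trans (by rw [hD, hDn]; linarith) hRD
  have bv : ∀ i, N (n + 2) (v i) ≤ 3 * (3 * (22 * (R * D)) + R * D) := by
    intro i
    have c1 := N_succ (n := n+1) (h.v i)
    rw [Fin.sum_univ_three] at c1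
    have c2 := N_succ (n := n) ((h.v i).P 0)
    rw [Fin.sum_univ_three] at c2
    have c3 := Tq_le h i 0 (τ := 1) (by decide)
    have c4 := Tq_le h i 0 (τ := 2) (by decide)
    rw [N_congr (P_comm (h.v i).c2 0 1)] at c3
    rw [N_congr (P_comm (h.v i).c2 0 2)] at c4
    have c5 : N (n+1) (P 1 (v i)) + N (n+1) (P 2 (v i)) ≤ Tq n v :=
      Finset.single_le_sum (f := fun i => (N (n + 1) (P 1 (v i)) + N (n + 1) (P 2 (v i))))
        (fun i _ => add_nonneg (N_nonneg _ _) (N_nonneg _ _)) (Finset.mem_univ i)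
    have := aa i
    linarith
  have bq : N (n + 1) q ≤ 3 * (102 * (R * D)) := by
    have c1 := N_succ (n := n) h.q
    rw [Fin.sum_univ_three] at c1
    have : N n (P 1 q) ≤ D := by rw [hD, hDn]; linarith
    have : N n (P 2 q) ≤ D := by rw [hD, hDn]; linarith
    linarith
  unfold An
  rw [Fin.sum_univ_three]
  have := bv 0
  have := bv 1
  have := bv 2
  nlinarith

/-- The flat estimate at level n. -/
def Est (μ p : ℝ) (n : ℕ) : Prop :=
  ∃ C : ℝ, 0 < C ∧ ∀ v q, Adm n v q → An n v q ≤ C * Dn μ p n v q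

lemma Est_succ {μ p : ℝ} (hμ : 0 < μ) (hp : 0 < p) {n : ℕ} (hE : Est μ p n) : Est μ p (n + 1) := by
  obtain ⟨C, hC, hE⟩ := hE
  obtain ⟨C', hC', hcomp⟩ := completion hμ hp
  refine ⟨C' * (1 + 2 * C), by positivity, fun v q h => ?_⟩
  have key : ∀ τ : Fin 3, τ ≠ 0 → An n (fun i => P τ (v i)) (P τ q) ≤ C * Dn μ p (n+1) v q := by
    intro τ hτ
    refine (hE _ _ (h.tang hτ)).trans (mul_le_mul_of_nonneg_left ?_ hC.le)
    unfold Dn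
    rw [← N_congr (P_Fd h.v τ)]
    refine add_le_add (N_P τ h.F) (Finset.sum_le_sum fun i _ => ?_)
    rw [← N_congr (P_Gd h μ p τ i)]
    exact N_P τ (h.G μ p i)
  have k1 := key 1 (by decide)
  have k2 := key 2 (by decide)
  unfold An at k1 k2
  have h3 := hcomp _ v q h
  have hT : Tq (n+1) v = ∑ i, N (n + 2) (P 1 (v i)) + ∑ i, N (n+2) (P 2 (v i)) := by
    unfold Tq; rw [Finset.sum_add_distrib]
  refine h3.trans ?_
  rw [mul_assoc]
  refine mul_le_mul_of_nonneg_left ?_ hC'.le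
  rw [hT]
  linarith

lemma ip_Gd {v q} (h : Adm 0 v q) (μ p : ℝ) (i : Fin 3) {g : E3 → ℝ} (hg : Reg 0 g) :
    ip (Gd μ p v q i) g = -μ * (∑ j, ip (P j (P j (v i))) g) + p * ip (P i q) g := by
  unfold Gd
  rw [ip_add ((h.v i).Lp3.smul _) ((h.q.P i).smul p) hg, ip_smul, ip_smul]
  unfold Lp3
  rw [ip_sum (fun j => ((h.v i).P j).P j) hg]

lemma tang_one {μ p : ℝ} (hμ : 0 < μ) (hp : 0 < p) {ε : ℝ} (hε : 0 < ε) {v q} (h : Adm 0 v q)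
    {τ : Fin 3} (hτ : τ ≠ 0) :
    μ / 2 * (∑ i, ∑ j, N 0 (P j (P τ (v i)))) ≤ p * (ε * N 0 (P τ q) + (4 * ε)⁻¹ * N 1 (Fd v))
      + (2 * μ)⁻¹ * ∑ i, N 0 (Gd μ p v q i) := by
  have hw : ∀ i, Reg 1 (P τ (v i)) := fun i => (h.v i).P τ
  have hb : ∀ i, ∀ x : E3, x 0 = 0 → P τ (v i) x = 0 := fun i => P_tang_zero (h.v i).c1 (h.b i) hτ
  have e1 : ∀ i j, ip (P j (P j (v i))) (P τ (P τ (v i))) = N 0 (P j (P τ (v i))) := by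
    intro i j
    have := symm_id ((h.v i).P j) (hw i) (hb i) j τ
    unfold ip
    rw [this]
    rw [← ip_self]
    exact ip_congr (P_comm (h.v i).c2 τ j) fun _ _ => rfl
  have e2 : ∑ i, ip (P i q) (P τ (P τ (v i))) = ip (P τ q) (P τ (Fd v)) := by
    have : ∀ i, ip (P i q) (P τ (P τ (v i))) = ip (P i (P τ (v i))) (P τ q) := by
      intro i
      rw [ip_comm (P i (P τ (v i)))]
      exact symm_id h.q (hw i) (hb i) i τ
    rw [Finset.sum_congr rfl fun i _ => this i, ← ip_sum (fun i => (hw i).P i) (h.q.P τ), ip_comm]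
    exact ip_congr (fun _ _ => rfl) fun x hx => (P_Fd h.v τ x hx).symm
  have e3 : ∑ i, ip (Gd μ p v q i) (P τ (P τ (v i))) = -μ * (∑ i, ∑ j, N 0 (P j (P τ (v i))))
      + p * ip (P τ q) (P τ (Fd v)) := by
    rw [← e2, Finset.mul_sum, Finset.mul_sum, ← Finset.sum_add_distrib]
    refine Finset.sum_congr rfl fun i _ => ?_
    rw [ip_Gd h μ p i ((hw i).P τ)]
    simp only [e1]
  have y1 := ip_young (h.q.P τ) (h.F.P τ) hε
  have y2 : ∀ i, -ip (Gd μ p v q i) (P τ (P τ (v i))) ≤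
      μ / 2 * (∑ j, N 0 (P j (P τ (v i)))) + (2 * μ)⁻¹ * N 0 (Gd μ p v q i) := by
    intro i
    have := ip_young ((hw i).P τ) (h.G μ p i) (half_pos hμ)
    rw [ip_comm, show 4 * (μ / 2) = 2 * μ by ring] at this
    have s := Finset.single_le_sum (f := fun j => N 0 (P j (P τ (v i))))
      (fun j _ => N_nonneg _ _) (Finset.mem_univ τ)
    have s2 := mul_le_mul_of_nonneg_left s (half_pos hμ).le
    have := neg_abs_le (ip (Gd μ p v q i) (P τ (P τ (v i))))
    linarith
  have y3 := Finset.sum_le_sum fun i (_ : i ∈ Finset.univ) => y2 i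
  rw [Finset.sum_neg_distrib, Finset.sum_add_distrib, ← Finset.mul_sum, ← Finset.mul_sum, e3] at y3
  have y4 : p * ip (P τ q) (P τ (Fd v)) ≤
      p * (ε * N 0 (P τ q) + (4 * ε)⁻¹ * N 1 (Fd v)) := by
    refine mul_le_mul_of_nonneg_left ((le_abs_self _).trans (y1.trans ?_)) hp.le
    have := N_P τ h.F
    have : (4 * ε)⁻¹ * N 0 (P τ (Fd v)) ≤ (4 * ε)⁻¹ * N 1 (Fd v) :=
      mul_le_mul_of_nonneg_left this (by positivity)
    linarith
  linarith

lemma Dn_nonneg (μ p n v q) : 0 ≤ Dn μ p n v q :=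
  add_nonneg (N_nonneg _ _) (Finset.sum_nonneg fun _ _ => N_nonneg _ _)

lemma tang_est {μ p : ℝ} (hμ : 0 < μ) (hp : 0 < p) {δ : ℝ} (hδ : 0 < δ) :
    ∃ C : ℝ, 0 < C ∧ ∀ v q, Adm 0 v q →
      Tq 0 v ≤ δ * (N 0 (P 1 q) + N 0 (P 2 q)) + C * Dn μ p 0 v q := by
  set ε := μ * δ / (6 * p) with hε
  have hε0 : 0 < ε := by positivity
  refine ⟨12 / μ * (p * (4 * ε)⁻¹ + (2 * μ)⁻¹), by positivity, fun v q h => ?_⟩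
  have t1 := tang_one hμ hp hε0 h (τ := 1) (by decide)
  have t2 := tang_one hμ hp hε0 h (τ := 2) (by decide)
  have hT : Tq 0 v ≤ 3 * (∑ i, ∑ j, N 0 (P j (P 1 (v i)))) + 3 * (∑ i, ∑ j, N 0 (P j (P 2 (v i)))) := by
    unfold Tq
    rw [Finset.mul_sum, Finset.mul_sum, ← Finset.sum_add_distrib]
    exact Finset.sum_le_sum fun i _ => add_le_add (N_succ ((h.v i).P 1)) (N_succ ((h.v i).P 2))
  set F := N 1 (Fd v)
  set G := ∑ i, N 0 (Gd μ p v q i)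
  have nF : 0 ≤ F := N_nonneg _ _
  have nG : 0 ≤ G := Finset.sum_nonneg fun _ _ => N_nonneg _ _
  set X1 := ∑ i, ∑ j, N 0 (P j (P 1 (v i)))
  set X2 := ∑ i, ∑ j, N 0 (P j (P 2 (v i)))
  have hD : Dn μ p 0 v q = F + G := rfl
  have e : p * ε = μ * δ / 6 := by rw [hε]; field_simp
  have k : μ / 2 * (X1 + X2) ≤ μ * δ / 6 * (N 0 (P 1 q) + N 0 (P 2 q))
      + 2 * (p * (4 * ε)⁻¹ + (2 * μ)⁻¹) * (F + G) := by
    have m1 : 0 ≤ p * (4 * ε)⁻¹ * G := by positivity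
    have m2 : 0 ≤ (2 * μ)⁻¹ * F := by positivity
    rw [← e]
    nlinarith
  have k2 : X1 + X2 ≤ 2 / μ * (μ * δ / 6 * (N 0 (P 1 q) + N 0 (P 2 q))
      + 2 * (p * (4 * ε)⁻¹ + (2 * μ)⁻¹) * (F + G)) := by
    have := mul_le_mul_of_nonneg_left k (by positivity : 0 ≤ 2 / μ)
    have e' : 2 / μ * (μ / 2 * (X1 + X2)) = X1 + X2 := by field_simp
    linarith
  rw [hD]
  have e3 : 3 * (2 / μ * (μ * δ / 6 * (N 0 (P 1 q) + N 0 (P 2 q))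
      + 2 * (p * (4 * ε)⁻¹ + (2 * μ)⁻¹) * (F + G))) = δ * (N 0 (P 1 q) + N 0 (P 2 q)) + 
      12 / μ * (p * (4 * ε)⁻¹ + (2 * μ)⁻¹) * (F + G) := by
    have : 2 / μ * (μ * δ / 6) = δ / 3 := by field_simp; norm_num
    have h3 : 3 * (2 / μ * (μ * δ / 6 * (N 0 (P 1 q) + N 0 (P 2 q))
      + 2 * (p * (4 * ε)⁻¹ + (2 * μ)⁻¹) * (F + G))) = 3 * (2 / μ * (μ * δ / 6)) * (N 0 (P 1 q) + N 0 (P 2 q))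
      + 12 / μ * (p * (4 * ε)⁻¹ + (2 * μ)⁻¹) * (F + G) := by ring
    rw [h3, this]; ring
  linarith

/-- Rank-one perturbation of the identity. -/
def rk (l : E3 →L[ℝ] ℝ) : E3 →L[ℝ] E3 := ContinuousLinearMap.id ℝ E3 + l.smulRight (ee 0)

lemma rk_apply (l : E3 →L[ℝ] ℝ) (x : E3) : rk l x = x + l x • ee 0 := by simp [rk]

lemma rk_det (l : E3 →L[ℝ] ℝ) : (rk l).det = 1 + l (ee 0) := by
  have : (rk l).det = (LinearMap.toMatrix (EuclideanSpace.basisFun (Fin 3) ℝ).toBasis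
      (EuclideanSpace.basisFun (Fin 3) ℝ).toBasis (rk l : E3 →ₗ[ℝ] E3)).det := by
    rw [LinearMap.det_toMatrix]
  rw [this, Matrix.det_fin_three]
  simp [LinearMap.toMatrix_apply, rk_apply]

/-- Dilation in the normal direction. -/
def dil : E3 →L[ℝ] E3 := rk ((3:ℝ) • (EuclideanSpace.proj 0 : E3 →L[ℝ] ℝ))

lemma dil_apply (x : E3) : dil x = x + (3 * x 0) • ee 0 := by simp [dil, rk_apply]
lemma dil_zero (x : E3) : dil x 0 = 4 * x 0 := by simp [dil_apply]; ring
lemma dil_det : dil.det = 4 := by unfold dil; rw [rk_det]; simp; norm_num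
lemma dil_Ho {x : E3} (hx : x ∈ Ho) : dil x ∈ Ho := by
  rw [mem_Ho] at *; rw [dil_zero]; positivity
lemma dil_Kc {x : E3} (hx : x ∈ Kc) : dil x ∈ Kc := by
  rw [mem_Kc] at *; rw [dil_zero]; positivity
lemma dil_inj : Function.Injective dil := by
  intro x y h
  have h0 : x 0 = y 0 := by
    have := congrArg (fun z : E3 => z 0) h
    simp only [dil_zero] at this; linarith
  rw [dil_apply, dil_apply, h0] at h
  exact add_right_cancel h
lemma dil_image : dil '' Ho = Ho := by
  ext x; constructor
  · rintro ⟨y, hy, rfl⟩; exact dil_Ho hy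
  · intro hx
    refine ⟨x - (3/4 * x 0) • ee 0, ?_, ?_⟩
    · rw [mem_Ho] at *; simp; linarith
    · rw [dil_apply]
      ext i; fin_cases i
      · simp; ring
      · simp
      · simp

lemma dil_int {f : E3 → ℝ} (hf : IntegrableOn f Ho) : IntegrableOn (fun x => f (dil x)) Ho := by
  have := (integrableOn_image_iff_integrableOn_abs_det_fderiv_smul volume measSet_Ho
    (fun x _ => dil.hasFDerivAt.hasFDerivWithinAt) dil_inj.injOn f).1 (by rw [dil_image]; exact hf)
  rw [dil_det] at this
  have h2 : IntegrableOn (fun x => (4:ℝ)⁻¹ * (|(4:ℝ)| • f (dil x))) Ho := this.const_mul _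
  refine h2.congr_fun (fun x _ => ?_) measSet_Ho
  simp

lemma dil_integral (f : E3 → ℝ) : ∫ x in Ho, f (dil x) = (1/4) * ∫ x in Ho, f x := by
  have := integral_image_eq_integral_abs_det_fderiv_smul volume measSet_Ho
    (fun x _ => dil.hasFDerivAt.hasFDerivWithinAt) dil_inj.injOn f
  rw [dil_image, dil_det] at this
  rw [this, ← integral_const_mul]
  simp

/-- Dilation factors. -/
def sf (i : Fin 3) : ℝ := if i = 0 then 4 else 1

lemma dil_ee (i : Fin 3) : dil (ee i) = sf i • ee i := by
  rw [dil_apply]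
  fin_cases i
  · ext j; simp [sf]; fin_cases j <;> simp; norm_num
  · simp [sf]
  · simp [sf]

lemma P_dil {f : E3 → ℝ} (hf : ContDiffOn ℝ (1:ℕ) f Kc) (i : Fin 3) {x : E3} (hx : x ∈ Kc) :
    P i (fun y => f (dil y)) x = sf i * P i f (dil x) := by
  unfold P
  have h1 := (hf.differentiableOn (by norm_num) (dil x) (dil_Kc hx)).hasFDerivWithinAt
  have h2 := h1.comp x (dil.hasFDerivAt.hasFDerivWithinAt (s := Kc)) (fun y hy => dil_Kc hy)
  have h3 := h2.fderivWithin (ud x hx)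
  change fderivWithin ℝ (fun y => f (dil y)) Kc x = _ at h3
  rw [h3]
  simp [dil_ee]

lemma Reg0_of {f : E3 → ℝ} (hc : ContinuousOn f Kc) (hi : IntegrableOn (fun x => f x ^ 2) Ho) :
    Reg 0 f := by
  refine ⟨by simpa using hc, fun j hj => ?_⟩
  obtain rfl : j = 0 := by omega
  simpa [dn_zero] using hi

lemma Reg0_dil {f : E3 → ℝ} (h : Reg 0 f) : Reg 0 (fun x => f (dil x)) :=
  Reg0_of (h.1.continuousOn.comp dil.continuous.continuousOn fun _ hx => dil_Kc hx)
    (dil_int h.int_sq)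

lemma N0_dil (f : E3 → ℝ) : N 0 (fun x => f (dil x)) = (1/4) * N 0 f := by
  rw [N_zero, N_zero, ← dil_integral]

lemma Reg_succ_of {n : ℕ} {f : E3 → ℝ} (hc : ContDiffOn ℝ (n+1:ℕ) f Kc) (h0 : Reg 0 f)
    (h : ∀ i, Reg n (P i f)) : Reg (n+1) f := by
  refine ⟨hc, fun j hj => ?_⟩
  rcases j with _ | j
  · exact h0.2 0 le_rfl
  · refine intOn_of_le hc hj (g := fun x => 3 * ∑ i, dn j (P i f) x ^ 2)
      ((integrable_finsetSum _ fun i _ => (h i).2 j (by omega)).const_mul 3) fun x hx => ?_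
    have := dn_succ_le (n := j) (hc.of_le (by exact_mod_cast hj)) (Ho_sub hx)
    have h2 := pow_le_pow_left₀ (dn_nonneg _ _ _) this 2
    refine h2.trans ?_
    simp only [Fin.sum_univ_three]
    nlinarith [sq_nonneg (dn j (P 0 f) x - dn j (P 1 f) x), sq_nonneg (dn j (P 0 f) x - dn j (P 2 f) x),
      sq_nonneg (dn j (P 1 f) x - dn j (P 2 f) x)]

lemma Reg_congr {n : ℕ} {f g : E3 → ℝ} (hg : Reg n g) (hc : ContDiffOn ℝ n f Kc)
    (h : ∀ x ∈ Ho, f x = g x) : Reg n f :=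
  ⟨hc, fun j hj => (hg.2 j hj).congr_fun (fun x hx => by simp only [dn_congr h hx]) measSet_Ho⟩

lemma Reg1_dil {f : E3 → ℝ} (h : Reg 1 f) : Reg 1 (fun x => f (dil x)) := by
  have hc : ContDiffOn ℝ (0+1:ℕ) (fun x => f (dil x)) Kc :=
    h.1.comp dil.contDiff.contDiffOn fun _ hx => dil_Kc hx
  refine Reg_succ_of hc (Reg0_dil (h.mono (by omega))) fun i => ?_
  exact Reg_congr ((Reg0_dil (h.P i)).smul (sf i)) (P_contDiffOn i hc)
    fun x hx => P_dil h.1 i (Ho_sub hx)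

lemma press_id {μ p : ℝ} {v q} (h : Adm 0 v q) {ψ : E3 → ℝ} (hψ : Reg 1 ψ)
    (h0 : ∀ x : E3, x 0 = 0 → ψ x = 0) :
    p * ∑ i, ip (P i q) (P i ψ) = ∑ i, ip (fun x => Gd μ p v q i x + μ * P i (Fd v) x) (P i ψ) := by
  have e1 : ∑ i, ∑ j, ip (P j (P j (v i))) (P i ψ) = ∑ j, ip (P j (Fd v)) (P j ψ) := by
    rw [Finset.sum_comm]
    refine Finset.sum_congr rfl fun j _ => ?_
    have e2 : ip (P j (Fd v)) (P j ψ) = ip (fun x => ∑ i, P i (P j (v i)) x) (P j ψ) :=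
      ip_congr (P_Fd h.v j) fun _ _ => rfl
    rw [e2, ip_sum (fun i => ((h.v i).P j).P i) (hψ.P j)]
    refine Finset.sum_congr rfl fun i _ => ?_
    exact symm_id ((h.v i).P j) hψ h0 j i
  have e3 : ∀ i, ip (fun x => Gd μ p v q i x + μ * P i (Fd v) x) (P i ψ) =
      -μ * (∑ j, ip (P j (P j (v i))) (P i ψ)) + p * ip (P i q) (P i ψ) + μ * ip (P i (Fd v)) (P i ψ) := by
    intro i
    rw [ip_add (h.G μ p i) ((h.F.P i).smul μ) (hψ.P i), ip_smul, ip_Gd h μ p i (hψ.P i)]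
  simp only [e3, Finset.sum_add_distrib, ← Finset.mul_sum]
  rw [e1]; ring

lemma press_est {μ p : ℝ} (hp : 0 < p) :
    ∃ C : ℝ, 0 < C ∧ ∀ v q, Adm 0 v q →
      N 0 (P 1 q) + N 0 (P 2 q) ≤ C * (Dn μ p 0 v q + N 0 (P 0 q)) := by
  refine ⟨4 / p * (100 * (1 + μ^2) * (1 + p + 1/p)), by positivity, fun v q h => ?_⟩
  set ψ : E3 → ℝ := fun x => q x - q (dil x) with hψd
  have hψ : Reg 1 ψ := h.q.sub (Reg1_dil h.q)
  have h0 : ∀ x : E3, x 0 = 0 → ψ x = 0 := by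
    intro x hx
    simp [hψd, dil_apply, hx]
  have hPψ : ∀ i, ∀ x ∈ Ho, P i ψ x = P i q x - sf i * P i q (dil x) := by
    intro i x hx
    rw [hψd, P_sub (Ho_sub hx) h.q.1 (Reg1_dil h.q).1, P_dil h.q.1 i (Ho_sub hx)]
  have rq := fun i => h.q.P i
  have rd := fun i => Reg0_dil (rq i)
  have nψ : ∀ i, N 0 (P i ψ) ≤ (2 + (sf i)^2 / 2) * N 0 (P i q) := by
    intro i
    rw [N_congr (hPψ i)]
    have := N_sub (rq i) ((rd i).smul (sf i))
    rw [N_smul _ (rd i), N0_dil] at this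
    linarith
  have id := press_id (μ := μ) (p := p) h hψ h0
  set H : Fin 3 → E3 → ℝ := fun i x => Gd μ p v q i x + μ * P i (Fd v) x with hH
  have rH : ∀ i, Reg 0 (H i) := fun i => (h.G μ p i).add ((h.F.P i).smul μ)
  have nH : ∀ i, N 0 (H i) ≤ 2 * N 0 (Gd μ p v q i) + 2 * μ^2 * N 1 (Fd v) := by
    intro i
    have := N_add (h.G μ p i) ((h.F.P i).smul μ)
    rw [N_smul _ (h.F.P i)] at this
    have := mul_le_mul_of_nonneg_left (N_P i h.F) (sq_nonneg μ)
    simp only [hH]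
    linarith
  have lower : ∀ i : Fin 3, i ≠ 0 → N 0 (P i q) / 2 ≤ ip (P i q) (P i ψ) := by
    intro i hi
    have e : ip (P i q) (P i ψ) = ip (P i q) (fun x => P i q x - 1 * P i q (dil x)) :=
      ip_congr (fun _ _ => rfl) fun x hx => by rw [hPψ i x hx]; simp [sf, hi]
    rw [e, ip_comm, ip_sub (rq i) ((rd i).smul 1) (rq i), ip_self, ip_smul, ip_comm]
    have := ip_young (rq i) (rd i) (δ := 1/4) (by norm_num)
    rw [N0_dil] at this
    have := (abs_le.1 this).2
    have : ((4:ℝ) * (1/4))⁻¹ = 1 := by norm_num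
    rw [this] at *
    linarith
  have y0 := ip_young (rq 0) (hψ.P 0) (δ := 1) (by norm_num)
  have z : ∀ i, ∀ η : ℝ, 0 < η → ip (H i) (P i ψ) ≤ η * N 0 (P i ψ) + (4*η)⁻¹ * N 0 (H i) := by
    intro i η hη
    rw [ip_comm]
    exact (le_abs_self _).trans (ip_young (hψ.P i) (rH i) hη)
  have z0 := z 0 p hp
  have z1 := z 1 (p/10) (by positivity)
  have z2 := z 2 (p/10) (by positivity)
  have l1 := lower 1 (by decide)
  have l2 := lower 2 (by decide)
  have n0 := nψ 0
  have n1 := nψ 1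
  have n2 := nψ 2
  have s0 : sf 0 = 4 := rfl
  have s1 : sf 1 = 1 := by simp [sf]
  have s2 : sf 2 = 1 := by simp [sf]
  rw [s0] at n0
  rw [s1] at n1
  rw [s2] at n2
  have a0 := (abs_le.1 y0).1
  simp only [Fin.sum_univ_three] at id
  set Y := N 0 (P 0 q)
  set Z1 := N 0 (P 1 q)
  set Z2 := N 0 (P 2 q)
  have hY : 0 ≤ Y := N_nonneg _ _
  have hD : Dn μ p 0 v q = N 1 (Fd v) + (N 0 (Gd μ p v q 0) + N 0 (Gd μ p v q 1)
    + N 0 (Gd μ p v q 2)) := by unfold Dn; rw [Fin.sum_univ_three]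
  set D := Dn μ p 0 v q
  have g0 := N_nonneg 0 (Gd μ p v q 0)
  have g1 := N_nonneg 0 (Gd μ p v q 1)
  have g2 := N_nonneg 0 (Gd μ p v q 2)
  have gf := N_nonneg 1 (Fd v)
  have hD0 : 0 ≤ D := by linarith
  have m2 := sq_nonneg μ
  have hb : ∀ i, N 0 (Gd μ p v q i) ≤ D → N 0 (H i) ≤ 2 * (1 + μ^2) * D := by
    intro i hi
    have := nH i
    have : μ^2 * N 1 (Fd v) ≤ μ^2 * D := mul_le_mul_of_nonneg_left (by linarith) m2
    linarith
  have b0 := hb 0 (by linarith)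
  have b1 := hb 1 (by linarith)
  have b2 := hb 2 (by linarith)
  have w0 : (4 * p)⁻¹ * N 0 (H 0) ≤ (4 * p)⁻¹ * (2 * (1 + μ^2) * D) :=
    mul_le_mul_of_nonneg_left b0 (by positivity)
  have w1 : (4 * (p/10))⁻¹ * N 0 (H 1) ≤ (4 * (p/10))⁻¹ * (2 * (1 + μ^2) * D) :=
    mul_le_mul_of_nonneg_left b1 (by positivity)
  have w2 : (4 * (p/10))⁻¹ * N 0 (H 2) ≤ (4 * (p/10))⁻¹ * (2 * (1 + μ^2) * D) :=
    mul_le_mul_of_nonneg_left b2 (by positivity)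
  have e4 : (4 * p)⁻¹ = 1/p/4 := by field_simp
  have e5 : (4 * (p/10))⁻¹ = 5/2 * (1/p) := by field_simp; norm_num
  rw [e4] at w0 z0
  rw [e5] at w1 w2 z1 z2
  set r := 1/p with hr
  have hr0 : 0 < r := by positivity
  have p0 := mul_le_mul_of_nonneg_left n0 hp.le
  have p1 := mul_le_mul_of_nonneg_left n1 hp.le
  have p2 := mul_le_mul_of_nonneg_left n2 hp.le
  have q1 := mul_le_mul_of_nonneg_left l1 hp.le
  have q2 := mul_le_mul_of_nonneg_left l2 hp.le
  have q0 := mul_le_mul_of_nonneg_left a0 hp.le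
  have e6 : ((4:ℝ) * 1)⁻¹ = 1/4 := by norm_num
  rw [e6] at q0
  have main : p / 4 * (Z1 + Z2) ≤ p * (20 * Y) + 20 * r * ((1 + μ^2) * D) := by
    have : 0 ≤ r * ((1 + μ^2) * D) := by positivity
    have : 0 ≤ p * Y := by positivity
    linarith
  have main2 : Z1 + Z2 ≤ 4 / p * (p * (20 * Y) + 20 * r * ((1 + μ^2) * D)) := by
    have := mul_le_mul_of_nonneg_left main (by positivity : 0 ≤ 4/p)
    have e' : 4 / p * (p / 4 * (Z1 + Z2)) = Z1 + Z2 := by field_simp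
    linarith
  refine main2.trans ?_
  rw [mul_assoc (4 / p)]
  refine mul_le_mul_of_nonneg_left ?_ (by positivity)
  have f1 : p * Y ≤ (1 + μ^2) * (1 + p + r) * Y := by
    refine mul_le_mul_of_nonneg_right ?_ hY
    nlinarith [mul_nonneg m2 hp.le, mul_nonneg m2 hr0.le]
  have f2 : r * ((1 + μ^2) * D) ≤ (1 + μ^2) * (1 + p + r) * D := by
    have : r * ((1 + μ^2) * D) = ((1 + μ^2) * r) * D := by ring
    rw [this]
    refine mul_le_mul_of_nonneg_right ?_ hD0
    exact mul_le_mul_of_nonneg_left (by linarith) (by positivity)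
  have f3 : 0 ≤ (1 + μ^2) * (1 + p + r) * D := by positivity
  have f4 : 0 ≤ (1 + μ^2) * (1 + p + r) * Y := by positivity
  linarith

lemma Est_zero {μ p : ℝ} (hμ : 0 < μ) (hp : 0 < p) : Est μ p 0 := by
  obtain ⟨Cc, hCc, hcomp⟩ := completion hμ hp
  obtain ⟨Cz, hCz, hz⟩ := press_est (μ := μ) hp
  set Cy := (2 + 100 * μ^2) / p^2 with hCy
  have hCy0 : 0 < Cy := by positivity
  -- Y ≤ Cy (D + T)
  set δ : ℝ := 1 / (2 * (Cz * Cy)) with hδ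
  have hδ0 : 0 < δ := by positivity
  obtain ⟨Ct, hCt, ht⟩ := tang_est hμ hp hδ0
  set Kt := 2 * (δ * Cz) + 1 + 2 * Ct with hKt
  have hKt0 : 0 < Kt := by positivity
  refine ⟨Cc * (1 + Kt + Cz * (1 + Cy * (1 + Kt))), by positivity, fun v q h => ?_⟩
  have c := hcomp 0 v q h
  have z := hz v q h
  have t := ht v q h
  have y := normal_q h μ p
  set D := Dn μ p 0 v q with hDd
  have hD0 : 0 ≤ D := Dn_nonneg _ _ _ _ _
  set T := Tq 0 v
  have hT0 : 0 ≤ T := Tq_nonneg _ _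
  have hG : N 0 (Gd μ p v q 0) + N 1 (Fd v) ≤ D := by
    rw [hDd]; unfold Dn
    have := Finset.single_le_sum (f := fun i => N 0 (Gd μ p v q i))
      (fun i _ => N_nonneg _ _) (Finset.mem_univ 0)
    linarith
  have nG := N_nonneg 0 (Gd μ p v q 0)
  have nF := N_nonneg 1 (Fd v)
  have yb : N 0 (P 0 q) ≤ Cy * (D + T) := by
    have h2 : p ^ 2 * N 0 (P 0 q) ≤ (2 + 100 * μ^2) * (D + T) := by
      have : 100 * μ ^ 2 * (N (0 + 1) (Fd v) + T) ≤ 100 * μ ^ 2 * (D + T) :=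
        mul_le_mul_of_nonneg_left (by linarith) (by positivity)
      linarith
    have hp2 : 0 < p^2 := by positivity
    have : N 0 (P 0 q) = (p ^ 2 * N 0 (P 0 q)) / p^2 := by field_simp
    rw [this, div_le_iff₀ hp2, hCy]
    refine h2.trans (le_of_eq ?_); field_simp
  set Z := N 0 (P 1 q) + N 0 (P 2 q) with hZ
  have zb : Z ≤ Cz * (D + Cy * (D + T)) := z.trans (mul_le_mul_of_nonneg_left (by linarith) hCz.le)
  have δe : δ * (Cz * Cy) = 1/2 := by rw [hδ]; field_simp
  have tb : T ≤ Kt * D := by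
    have := mul_le_mul_of_nonneg_left zb hδ0.le
    have e : δ * (Cz * (D + Cy * (D + T))) = δ * Cz * D + (δ * (Cz * Cy)) * (D + T) := by ring
    rw [e, δe] at this
    rw [hKt]
    nlinarith
  have zc : Z ≤ Cz * (1 + Cy * (1 + Kt)) * D := by
    refine zb.trans ?_
    rw [mul_assoc]
    refine mul_le_mul_of_nonneg_left ?_ hCz.le
    have := mul_le_mul_of_nonneg_left tb hCy0.le
    linarith
  refine c.trans ?_
  rw [mul_assoc]
  refine mul_le_mul_of_nonneg_left ?_ hCc.le
  linarith

lemma Est_all {μ p : ℝ} (hμ : 0 < μ) (hp : 0 < p) (n : ℕ) : Est μ p n := by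
  induction n with
  | zero => exact Est_zero hμ hp
  | succ n ih => exact Est_succ hμ hp ih

/-- Coefficient functions that are small with their derivatives up to order `K`. -/
def SmallC (K : ℕ) (ε : ℝ) (m : E3 → ℝ) : Prop :=
  ContDiffOn ℝ K m Kc ∧ ∀ j ≤ K, ∀ x ∈ Ho, dn j m x ≤ ε

/-- Sum of seminorms. -/
def Sn (n : ℕ) (f : E3 → ℝ) : ℝ := ∑ j ∈ Finset.range (n + 1), N j f

lemma Sn_nonneg (n f) : 0 ≤ Sn n f := Finset.sum_nonneg fun _ _ => N_nonneg _ _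

lemma N_le_Sn {n j : ℕ} (hj : j ≤ n) (f) : N j f ≤ Sn n f :=
  Finset.single_le_sum (f := fun j => N j f) (fun _ _ => N_nonneg _ _)
    (Finset.mem_range.2 (by omega))

lemma dn_mul_sq {n : ℕ} {ε : ℝ} {m f : E3 → ℝ} (hm : SmallC n ε m)
    (hf : ContDiffOn ℝ n f Kc) {x : E3} (hx : x ∈ Ho) :
    dn n (fun y => m y * f y) x ^ 2 ≤
      (4 ^ n * (n + 1)) * ε ^ 2 * ∑ j ∈ Finset.range (n + 1), dn j f x ^ 2 := by
  have h1 := norm_iteratedFDerivWithin_mul_le (A := ℝ) hm.1 hf ud (Ho_sub hx) (n := n) le_rfl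
  change dn n (fun y => m y * f y) x ≤ _ at h1
  have hε : 0 ≤ ε := (dn_nonneg _ _ _).trans (hm.2 0 (by omega) x hx)
  have h2 : dn n (fun y => m y * f y) x ≤ 2 ^ n * ε * ∑ j ∈ Finset.range (n + 1), dn j f x := by
    refine h1.trans ?_
    rw [← Finset.sum_range_reflect (fun j => dn j f x), Finset.mul_sum]
    refine Finset.sum_le_sum fun i hi => ?_
    have hi' : i ≤ n := by have := Finset.mem_range.1 hi; omega
    have e : n + 1 - 1 - i = n - i := by omega
    rw [e]
    change _ * dn i m x * dn (n - i) f x ≤ _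
    have c : (n.choose i : ℝ) ≤ 2 ^ n := by
      exact_mod_cast Nat.choose_le_two_pow n i
    have := hm.2 i hi' x hx
    have d1 := dn_nonneg i m x
    have d2 := dn_nonneg (n - i) f x
    gcongr
  have h3 := pow_le_pow_left₀ (dn_nonneg _ _ _) h2 2
  refine h3.trans ?_
  have h4 := sq_sum_le_card_mul_sum_sq (s := Finset.range (n+1)) (f := fun j => dn j f x)
  rw [mul_pow, mul_pow, ← pow_mul, mul_comm n 2, pow_mul]
  norm_num at h4 ⊢
  have : (0:ℝ) ≤ 4 ^ n * ε ^ 2 := by positivity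
  have := mul_le_mul_of_nonneg_left h4 this
  linarith

lemma SmallC.mono {K n : ℕ} {ε : ℝ} {m} (h : SmallC K ε m) (hn : n ≤ K) : SmallC n ε m :=
  ⟨h.1.of_le (by exact_mod_cast hn), fun j hj => h.2 j (hj.trans hn)⟩

lemma Reg.smallmul {n : ℕ} {ε : ℝ} {m f : E3 → ℝ} (hf : Reg n f) (hm : SmallC n ε m) :
    Reg n (fun y => m y * f y) := by
  have hc := hm.1.mul hf.1
  refine ⟨hc, fun j hj => ?_⟩
  refine intOn_of_le hc hj ?_ fun x hx => dn_mul_sq (hm.mono hj) (hf.mono hj).1 hx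
  exact (integrable_finsetSum _ fun i hi => hf.2 i (by have := Finset.mem_range.1 hi; omega)).const_mul _

/-- Product constant. -/
def cm (n : ℕ) : ℝ := 4 ^ n * (n + 1)
lemma cm_pos (n) : 0 < cm n := by unfold cm; positivity
lemma cm_one (n) : 1 ≤ cm n := by
  unfold cm
  have : (1:ℝ) ≤ 4 ^ n := one_le_pow₀ (by norm_num)
  have : (0:ℝ) ≤ n := by positivity
  nlinarith
lemma cm_mono {n k : ℕ} (h : n ≤ k) : cm n ≤ cm k := by
  unfold cm
  gcongr
  norm_num

lemma N_smallmul {n : ℕ} {ε : ℝ} {m f : E3 → ℝ} (hf : Reg n f) (hm : SmallC n ε m) :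
    N n (fun y => m y * f y) ≤ cm n * ε ^ 2 * Sn n f := by
  have hi : ∀ i ∈ Finset.range (n+1), IntegrableOn (fun x => dn i f x ^ 2) Ho :=
    fun i hi => hf.2 i (by have := Finset.mem_range.1 hi; omega)
  refine (N_mono_of ?_ fun x hx => dn_mul_sq hm hf.1 hx).trans ?_
  · exact (integrable_finsetSum _ hi).const_mul _
  · rw [integral_const_mul, integral_finsetSum _ hi]
    rfl

/-- Transformed derivative. -/
def Td (m : Fin 3 → E3 → ℝ) (i : Fin 3) (f : E3 → ℝ) : E3 → ℝ := fun x => P i f x - m i x * P 0 f x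

/-- Transformed divergence. -/
def FT (m : Fin 3 → E3 → ℝ) (v : Fin 3 → E3 → ℝ) : E3 → ℝ := fun x => ∑ i, Td m i (v i) x
/-- Transformed Stokes operator. -/
def GT (m : Fin 3 → E3 → ℝ) (μ p : ℝ) (v : Fin 3 → E3 → ℝ) (q : E3 → ℝ) (i : Fin 3) : E3 → ℝ :=
  fun x => -μ * (∑ j, Td m j (Td m j (v i)) x) + p * Td m i q x

lemma Reg.Td {n : ℕ} {ε : ℝ} {m : Fin 3 → E3 → ℝ} {f : E3 → ℝ} (hf : Reg (n+1) f)
    (hm : ∀ i, SmallC n ε (m i)) (i) : Reg n (Td m i f) :=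
  (hf.P i).sub ((hf.P 0).smallmul (hm i))

/-- Total quantity. -/
def Bk (k : ℕ) (v : Fin 3 → E3 → ℝ) (q : E3 → ℝ) : ℝ :=
  ∑ n ∈ Finset.range (k + 1), An n v q + ∑ i, N 1 (v i)

lemma An_nonneg (n v q) : 0 ≤ An n v q :=
  add_nonneg (Finset.sum_nonneg fun _ _ => N_nonneg _ _) (N_nonneg _ _)

lemma An_le_Bk {k n : ℕ} (h : n ≤ k) (v q) : An n v q ≤ Bk k v q := by
  have h1 := Finset.single_le_sum (f := fun n => An n v q) (fun n _ => An_nonneg n v q)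
    (Finset.mem_range.2 (by omega : n < k + 1))
  have : 0 ≤ ∑ i, N 1 (v i) := Finset.sum_nonneg fun _ _ => N_nonneg _ _
  unfold Bk
  linarith

lemma Bk_nonneg (k v q) : 0 ≤ Bk k v q := (An_nonneg 0 v q).trans (An_le_Bk (by omega) v q)

lemma Nv_le_Bk {k j : ℕ} (h1 : 1 ≤ j) (h2 : j ≤ k + 2) (v q) (i : Fin 3) : N j (v i) ≤ Bk k v q := by
  have s := fun j => Finset.single_le_sum (f := fun i => N j (v i)) (fun i _ => N_nonneg j (v i))
    (Finset.mem_univ i)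
  obtain rfl | hj : j = 1 ∨ 2 ≤ j := by omega
  · have := s 1
    have h0 : 0 ≤ ∑ n ∈ Finset.range (k + 1), An n v q := Finset.sum_nonneg fun n _ => An_nonneg n v q
    unfold Bk
    linarith
  · obtain ⟨n, rfl⟩ : ∃ n, j = n + 2 := ⟨j - 2, by omega⟩
    refine le_trans ?_ (An_le_Bk (by omega : n ≤ k) v q)
    have := s (n+2)
    have := N_nonneg (n+1) q
    unfold An
    linarith

lemma Nq_le_Bk {k j : ℕ} (h1 : 1 ≤ j) (h2 : j ≤ k + 1) (v q) : N j q ≤ Bk k v q := by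
  obtain ⟨n, rfl⟩ : ∃ n, j = n + 1 := ⟨j - 1, by omega⟩
  refine le_trans ?_ (An_le_Bk (by omega : n ≤ k) v q)
  have : 0 ≤ ∑ i, N (n+2) (v i) := Finset.sum_nonneg fun _ _ => N_nonneg _ _
  unfold An
  linarith

lemma Sn_le {n : ℕ} {f : E3 → ℝ} {B : ℝ} (h : ∀ j ≤ n, N j f ≤ B) : Sn n f ≤ (n + 1) * B := by
  unfold Sn
  refine (Finset.sum_le_card_nsmul _ _ B fun j hj => h j ?_).trans ?_
  · have := Finset.mem_range.1 hj; omega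
  · simp

lemma SnP_v {k n : ℕ} (hn : n ≤ k + 1) {v q} (h : Adm k v q) (i j : Fin 3) :
    Sn n (P j (v i)) ≤ (n + 1) * Bk k v q :=
  Sn_le fun l hl => (N_P j ((h.v i).mono (by omega : l + 1 ≤ k + 2))).trans
    (Nv_le_Bk (by omega) (by omega) v q i)

lemma SnP_q {k n : ℕ} (hn : n ≤ k) {v q} (h : Adm k v q) (j : Fin 3) :
    Sn n (P j q) ≤ (n + 1) * Bk k v q :=
  Sn_le fun l hl => (N_P j (h.q.mono (by omega : l + 1 ≤ k + 1))).trans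
    (Nq_le_Bk (by omega) (by omega) v q)

/-- Combined constant. -/
def ck (k : ℕ) : ℝ := cm (k + 1) * (k + 2)
lemma ck_pos (k) : 0 < ck k := by unfold ck; have := cm_pos (k+1); positivity
lemma ck_one (k) : 1 ≤ ck k := by
  unfold ck; have := cm_one (k+1)
  have : (0:ℝ) ≤ k := by positivity
  nlinarith

lemma N_mPv {k n : ℕ} (hn : n ≤ k + 1) {v q} (h : Adm k v q) {ε : ℝ} {m : E3 → ℝ}
    (hm : SmallC (k + 1) ε m) (i : Fin 3) :
    N n (fun y => m y * P 0 (v i) y) ≤ ck k * ε ^ 2 * Bk k v q := by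
  refine (N_smallmul (((h.v i).P 0).mono hn) (hm.mono hn)).trans ?_
  have h1 := SnP_v hn h i 0
  have h2 := cm_mono hn
  have h3 := Bk_nonneg k v q
  have h4 : ((n:ℝ) + 1) ≤ k + 2 := by
    have : (n:ℝ) ≤ ((k + 1 : ℕ) : ℝ) := by exact_mod_cast hn
    push_cast at this; linarith
  have h5 : Sn n (P 0 (v i)) ≤ (k + 2) * Bk k v q := h1.trans (mul_le_mul_of_nonneg_right h4 h3)
  have := Sn_nonneg n (P 0 (v i))
  have := cm_pos n
  have := cm_pos (k + 1)
  calc cm n * ε ^ 2 * Sn n (P 0 (v i)) ≤ cm (k+1) * ε ^ 2 * ((k + 2) * Bk k v q) := by gcongr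
    _ = _ := by unfold ck; ring

lemma N_mPq {k n : ℕ} (hn : n ≤ k) {v q} (h : Adm k v q) {ε : ℝ} {m : E3 → ℝ}
    (hm : SmallC (k + 1) ε m) :
    N n (fun y => m y * P 0 q y) ≤ ck k * ε ^ 2 * Bk k v q := by
  refine (N_smallmul ((h.q.P 0).mono hn) (hm.mono (by omega))).trans ?_
  have h1 := SnP_q hn h 0
  have h2 := cm_mono (by omega : n ≤ k + 1)
  have h3 := Bk_nonneg k v q
  have h4 : ((n:ℝ) + 1) ≤ k + 2 := by
    have : (n:ℝ) ≤ k := by exact_mod_cast hn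
    linarith
  have h5 : Sn n (P 0 q) ≤ (k + 2) * Bk k v q := h1.trans (mul_le_mul_of_nonneg_right h4 h3)
  have := Sn_nonneg n (P 0 q)
  have := cm_pos n
  have := cm_pos (k + 1)
  calc cm n * ε ^ 2 * Sn n (P 0 q) ≤ cm (k+1) * ε ^ 2 * ((k + 2) * Bk k v q) := by gcongr
    _ = _ := by unfold ck; ring

lemma N_Td {k n : ℕ} (hn : n ≤ k + 1) {v q} (h : Adm k v q) {ε : ℝ} (hε : 0 ≤ ε) (hε1 : ε ≤ 1)
    {m : Fin 3 → E3 → ℝ} (hm : ∀ j, SmallC (k + 1) ε (m j)) (i j : Fin 3) :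
    N n (Td m j (v i)) ≤ 4 * ck k * Bk k v q := by
  have h1 := N_sub (((h.v i).P j).mono hn) ((((h.v i).P 0).smallmul (hm j)).mono hn)
  have h2 := N_mPv hn h (hm j) i
  have h3 : N n (P j (v i)) ≤ Bk k v q := (N_P j ((h.v i).mono (by omega : n + 1 ≤ k + 2))).trans
    (Nv_le_Bk (by omega) (by omega) v q i)
  have hB := Bk_nonneg k v q
  have hc := ck_one k
  have he : ε ^ 2 ≤ 1 := by nlinarith
  have h4 : ck k * ε ^ 2 * Bk k v q ≤ ck k * Bk k v q := by
    have : ck k * ε ^ 2 ≤ ck k * 1 := mul_le_mul_of_nonneg_left he (by linarith)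
    rw [mul_one] at this
    exact mul_le_mul_of_nonneg_right this hB
  have h5 : Bk k v q ≤ ck k * Bk k v q := by nlinarith
  change N n (fun x => P j (v i) x - m j x * P 0 (v i) x) ≤ _
  linarith

/-- Perturbation constant. -/
def pc (k : ℕ) : ℝ := 8 * ck k ^ 2
lemma pc_pos (k) : 0 < pc k := by unfold pc; have := ck_pos k; positivity

lemma lap_diff {k n : ℕ} (hn : n ≤ k) {v q} (h : Adm k v q) {ε : ℝ} (hε : 0 ≤ ε) (hε1 : ε ≤ 1)
    {m : Fin 3 → E3 → ℝ} (hm : ∀ j, SmallC (k + 1) ε (m j)) (i j : Fin 3) :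
    Reg k (fun x => P j (P j (v i)) x - Td m j (Td m j (v i)) x) ∧
    N n (fun x => P j (P j (v i)) x - Td m j (Td m j (v i)) x) ≤ 
      3 * pc k * ε ^ 2 * Bk k v q := by
  have rT : Reg (k+1) (Td m j (v i)) := (h.v i).Td hm j
  have rm : Reg (k+1) (fun y => m j y * P 0 (v i) y) := ((h.v i).P 0).smallmul (hm j)
  have r2 : Reg k (fun y => m j y * P 0 (Td m j (v i)) y) :=
    (rT.P 0).smallmul ((hm j).mono (by omega))
  refine ⟨(((h.v i).P j).P j).sub (rT.Td (fun i => (hm i).mono (by omega)) j), ?_⟩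
  have e : ∀ x ∈ Ho, P j (P j (v i)) x - Td m j (Td m j (v i)) x =
      P j (fun y => m j y * P 0 (v i) y) x + m j x * P 0 (Td m j (v i)) x := by
    intro x hx
    have : P j (Td m j (v i)) x = P j (P j (v i)) x - P j (fun y => m j y * P 0 (v i) y) x :=
      P_sub (Ho_sub hx) ((h.v i).P j).c1 rm.c1
    change P j (P j (v i)) x - (P j (Td m j (v i)) x - m j x * P 0 (Td m j (v i)) x) = _
    rw [this]; ring
  rw [N_congr e]
  have b1 := N_add ((rm.P j).mono hn) (r2.mono hn)
  have b2 := N_P j (rm.mono (by omega : n + 1 ≤ k + 1))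
  have b3 := N_mPv (by omega : n + 1 ≤ k + 1) h (hm j) i
  have b4 := N_smallmul ((rT.P 0).mono hn) ((hm j).mono (by omega : n ≤ k + 1))
  have b5 : Sn n (P 0 (Td m j (v i))) ≤ (n + 1) * (4 * ck k * Bk k v q) :=
    Sn_le fun l hl => (N_P 0 (rT.mono (by omega : l + 1 ≤ k + 1))).trans
      (N_Td (by omega) h hε hε1 hm i j)
  have hB := Bk_nonneg k v q
  have hc := ck_one k
  have h4 : ((n:ℝ) + 1) ≤ k + 2 := by
    have : (n:ℝ) ≤ k := by exact_mod_cast hn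
    linarith
  have b6 : cm n * ε ^ 2 * Sn n (P 0 (Td m j (v i))) ≤
      cm (k+1) * ε ^ 2 * ((k + 2) * (4 * ck k * Bk k v q)) := by
    have := cm_pos n
    have := cm_mono (by omega : n ≤ k + 1)
    have := Sn_nonneg n (P 0 (Td m j (v i)))
    have := cm_pos (k+1)
    have hB4 : 0 ≤ 4 * ck k * Bk k v q := by positivity
    have b5' := b5.trans (mul_le_mul_of_nonneg_right h4 hB4)
    gcongr
  have e2 : cm (k+1) * ε ^ 2 * ((k + 2) * (4 * ck k * Bk k v q)) = 4 * ck k ^ 2 * (ε ^ 2 * Bk k v q) := by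
    unfold ck; ring
  have hEB : 0 ≤ ε ^ 2 * Bk k v q := by positivity
  have b7 : ck k * ε ^ 2 * Bk k v q ≤ ck k ^ 2 * (ε ^ 2 * Bk k v q) := by
    rw [mul_assoc]
    exact mul_le_mul_of_nonneg_right (by nlinarith) hEB
  have : 0 ≤ ck k ^ 2 * (ε ^ 2 * Bk k v q) := by positivity
  unfold pc
  linarith

lemma F_diff {k n : ℕ} (hn : n ≤ k) {v q} (h : Adm k v q) {ε : ℝ}
    {m : Fin 3 → E3 → ℝ} (hm : ∀ j, SmallC (k + 1) ε (m j)) :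
    N (n + 1) (Fd v) ≤ 2 * N (n + 1) (FT m v) + 24 * ck k * ε ^ 2 * Bk k v q := by
  have e : ∀ x ∈ Ho, Fd v x = FT m v x + ∑ i, m i x * P 0 (v i) x := by
    intro x hx
    unfold Fd FT Td
    rw [← Finset.sum_add_distrib]
    exact Finset.sum_congr rfl fun i _ => by ring
  have rm : ∀ i, Reg (n+1) (fun y => m i y * P 0 (v i) y) :=
    fun i => (((h.v i).P 0).smallmul (hm i)).mono (by omega)
  have rT : Reg (n+1) (FT m v) := Reg.sum fun i => ((h.v i).Td hm i).mono (by omega)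
  rw [N_congr e]
  have b1 := N_add rT (Reg.sum rm)
  have b2 := N_sum rm
  have b3 : ∑ i, N (n+1) (fun y => m i y * P 0 (v i) y) ≤ 3 * (ck k * ε ^ 2 * Bk k v q) := by
    rw [Fin.sum_univ_three]
    have := fun i => N_mPv (by omega : n + 1 ≤ k + 1) h (hm i) i
    linarith [this 0, this 1, this 2]
  linarith

lemma Reg.GT {k : ℕ} {v q} (h : Adm k v q) {ε : ℝ}
    {m : Fin 3 → E3 → ℝ} (hm : ∀ j, SmallC (k + 1) ε (m j)) (μ p : ℝ) (i : Fin 3) :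
    Reg k (GT m μ p v q i) :=
  ((Reg.sum fun j => ((h.v i).Td hm j).Td (fun i => (hm i).mono (by omega)) j).smul (-μ)).add
    ((h.q.Td (fun i => (hm i).mono (by omega)) i).smul p)

lemma G_diff {k n : ℕ} (hn : n ≤ k) {v q} (h : Adm k v q) {ε : ℝ} (hε : 0 ≤ ε) (hε1 : ε ≤ 1)
    {m : Fin 3 → E3 → ℝ} (hm : ∀ j, SmallC (k + 1) ε (m j)) (μ p : ℝ) (i : Fin 3) :
    N n (Gd μ p v q i) ≤ 2 * N n (GT m μ p v q i) + 200 * (μ ^ 2 + p ^ 2) * pc k * ε ^ 2 * Bk k v q := by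
  have e : ∀ x ∈ Ho, Gd μ p v q i x = GT m μ p v q i x +
      (-μ * (∑ j, (P j (P j (v i)) x - Td m j (Td m j (v i)) x)) + p * (m i x * P 0 q x)) := by
    intro x hx
    unfold Gd GT Lp3
    rw [Finset.sum_sub_distrib]
    conv_rhs => enter [1,2]; unfold Td
    ring
  rw [N_congr e]
  have rl := fun j => (lap_diff hn h hε hε1 hm i j).1.mono hn
  have nl := fun j => (lap_diff hn h hε hε1 hm i j).2
  have rq : Reg n (fun x => m i x * P 0 q x) :=
    ((h.q.P 0).smallmul ((hm i).mono (by omega))).mono hn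
  have nq := N_mPq hn h (hm i)
  have b1 := N_add ((Reg.GT h hm μ p i).mono hn) (((Reg.sum rl).smul (-μ)).add (rq.smul p))
  have b2 := N_add ((Reg.sum rl).smul (-μ)) (rq.smul p)
  rw [N_smul _ (Reg.sum rl), N_smul _ rq] at b2
  have b3 := N_sum rl
  rw [Fin.sum_univ_three] at b3
  set E := ε ^ 2 * Bk k v q with hE
  have hE0 : 0 ≤ E := mul_nonneg (sq_nonneg _) (Bk_nonneg _ _ _)
  have hck : ck k ≤ pc k := by unfold pc; nlinarith [ck_one k]
  have b4 : N n (fun x => ∑ j, (P j (P j (v i)) x - Td m j (Td m j (v i)) x)) ≤ 36 * (pc k * E) := by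
    have := nl 0
    have := nl 1
    have := nl 2
    rw [hE]
    linarith
  have b5 : N n (fun y => m i y * P 0 q y) ≤ pc k * E := by
    refine nq.trans ?_
    rw [mul_assoc]
    exact mul_le_mul_of_nonneg_right hck hE0
  have c4 := mul_le_mul_of_nonneg_left b4 (sq_nonneg μ)
  have c5 := mul_le_mul_of_nonneg_left b5 (sq_nonneg p)
  have hpE : 0 ≤ pc k * E := mul_nonneg (pc_pos k).le hE0
  have d1 : 0 ≤ μ ^ 2 * (pc k * E) := by positivity
  have d2 : 0 ≤ p ^ 2 * (pc k * E) := by positivity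
  have fin : 200 * (μ ^ 2 + p ^ 2) * pc k * ε ^ 2 * Bk k v q =
    200 * (μ ^ 2 * (pc k * E)) + 200 * (p ^ 2 * (pc k * E)) := by rw [hE]; ring
  rw [fin, ]
  have e4 : (-μ)^2 = μ ^ 2 := by ring
  rw [e4] at b2
  linarith

/-- Transformed data. -/
def DT (m : Fin 3 → E3 → ℝ) (μ p : ℝ) (k : ℕ) (v : Fin 3 → E3 → ℝ) (q : E3 → ℝ) : ℝ :=
  ∑ n ∈ Finset.range (k + 1), (N (n + 1) (FT m v) + ∑ i, N n (GT m μ p v q i))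

theorem pert_est {μ p : ℝ} (hμ : 0 < μ) (hp : 0 < p) (k : ℕ) :
    ∃ ε C : ℝ, 0 < ε ∧ ε ≤ 1 ∧ 0 < C ∧ ∀ m : Fin 3 → E3 → ℝ, (∀ j, SmallC (k + 1) ε (m j)) →
      ∀ v q, Adm k v q → Bk k v q ≤ C * (DT m μ p k v q + ∑ i, N 1 (v i)) := by
  choose Ce hCe hE using fun n => Est_all hμ hp n
  set C0 := ∑ n ∈ Finset.range (k + 1), Ce n with hC0
  have hC0pos : 0 < C0 := Finset.sum_pos (fun n _ => hCe n) (by simp)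
  set R := 24 * ck k + 600 * (μ ^ 2 + p ^ 2) * pc k with hR
  have hR0 : 0 < R := by have := ck_pos k; have := pc_pos k; positivity
  set Q := C0 * (k + 1) * R with hQ
  have hQ0 : 0 < Q := by positivity
  set ε : ℝ := min 1 (1 / (2 * Q)) with hεd
  have hε : 0 < ε := lt_min one_pos (by positivity)
  have hε1 : ε ≤ 1 := min_le_left _ _
  have hεQ : Q * ε ^ 2 ≤ 1 / 2 := by
    have h1 : ε ≤ 1 / (2 * Q) := min_le_right _ _
    have h2 : ε ^ 2 ≤ ε := by nlinarith
    have h3 : Q * ε ≤ Q * (1 / (2 * Q)) := mul_le_mul_of_nonneg_left h1 hQ0.le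
    have h4 : Q * (1 / (2 * Q)) = 1 / 2 := by field_simp
    nlinarith
  refine ⟨ε, 4 * C0 + 2, hε, hε1, by positivity, fun m hm v q h => ?_⟩
  set B := Bk k v q with hB
  have hB0 : 0 ≤ B := Bk_nonneg k v q
  have step : ∀ n ∈ Finset.range (k + 1), An n v q ≤
      C0 * (2 * (N (n + 1) (FT m v) + ∑ i, N n (GT m μ p v q i)) + R * ε ^ 2 * B) := by
    intro n hn
    have hn' : n ≤ k := by have := Finset.mem_range.1 hn; omega
    have h1 := hE n v q (h.mono hn')
    have hc : Ce n ≤ C0 := Finset.single_le_sum (f := Ce) (fun n _ => (hCe n).le) hn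
    have hd := Dn_nonneg μ p n v q
    refine h1.trans ((mul_le_mul_of_nonneg_right hc hd).trans (mul_le_mul_of_nonneg_left ?_ hC0pos.le))
    have f := F_diff hn' h hm
    have g := fun i => G_diff hn' h hε.le hε1 hm μ p i
    unfold Dn
    rw [Fin.sum_univ_three, Fin.sum_univ_three, hR]
    have := g 0
    have := g 1
    have := g 2
    linarith
  have s := Finset.sum_le_sum step
  rw [← Finset.mul_sum, Finset.sum_add_distrib, ← Finset.mul_sum] at s
  simp only [Finset.sum_const, Finset.card_range, nsmul_eq_mul] at s
  push_cast at s
  have hDT : DT m μ p k v q = ∑ n ∈ Finset.range (k + 1), (N (n + 1) (FT m v) + ∑ i, N n (GT m μ p v q i)) := rfl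
  rw [← hDT] at s
  have hDT0 : 0 ≤ DT m μ p k v q := Finset.sum_nonneg fun n _ =>
    add_nonneg (N_nonneg _ _) (Finset.sum_nonneg fun _ _ => N_nonneg _ _)
  have s2 : B ≤ C0 * (2 * DT m μ p k v q) + (Q * ε ^ 2) * B + ∑ i, N 1 (v i) := by
    have : B = ∑ n ∈ Finset.range (k + 1), An n v q + ∑ i, N 1 (v i) := rfl
    rw [hQ]
    linarith
  have s3 : (Q * ε ^ 2) * B ≤ 1/2 * B := mul_le_mul_of_nonneg_right hεQ hB0
  have n1 : 0 ≤ ∑ i, N 1 (v i) := Finset.sum_nonneg fun _ _ => N_nonneg _ _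
  nlinarith [mul_nonneg hC0pos.le n1]

lemma one_dim {V : Type*} [NormedAddCommGroup V] [NormedSpace ℝ V] {φ φ' : ℝ → V}
    (hφ : ∀ t, HasDerivAt φ (φ' t) t) (hc' : Continuous φ') :
    ‖φ 0‖ ≤ ∫ t in (0:ℝ)..1, (‖φ t‖ + ‖φ' t‖) := by
  have hc : Continuous φ := continuous_iff_continuousAt.2 fun t => (hφ t).continuousAt
  set I := ∫ t in (0:ℝ)..1, ‖φ' t‖ with hI
  have key : ∀ t ∈ Icc (0:ℝ) 1, ‖φ 0‖ ≤ ‖φ t‖ + I := by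
    intro t ht
    have h0 : ‖φ t - φ 0‖ ≤ ∫ s in (0:ℝ)..t, ‖φ' s‖ := by
      have B : ∀ s, HasDerivAt (fun r => ∫ s in (0:ℝ)..r, ‖φ' s‖) (‖φ' s‖) s := fun s =>
        intervalIntegral.integral_hasDerivAt_right (hc'.norm.intervalIntegrable _ _)
          (hc'.norm.stronglyMeasurableAtFilter _ _) hc'.norm.continuousAt
      have := image_norm_le_of_norm_deriv_right_le_deriv_boundary' (a := 0) (b := t)
        (f := fun s => φ s - φ 0) (f' := φ') (B := fun r => ∫ s in (0:ℝ)..r, ‖φ' s‖)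
        (B' := fun s => ‖φ' s‖)
        (hc.sub continuous_const).continuousOn
        (fun s _ => ((hφ s).sub_const _).hasDerivWithinAt) (by simp)
        (fun s _ => (B s).continuousAt.continuousWithinAt)
        (fun s _ => (B s).hasDerivWithinAt) (fun s _ => le_rfl)
      exact this (right_mem_Icc.2 ht.1)
    have h1 : ∫ s in (0:ℝ)..t, ‖φ' s‖ ≤ I := by
      refine intervalIntegral.integral_mono_interval le_rfl ht.1 ht.2
        (Eventually.of_forall fun _ => norm_nonneg _) (hc'.norm.intervalIntegrable _ _)
    have h2 : ‖φ 0‖ ≤ ‖φ t‖ + ‖φ t - φ 0‖ := by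
      have := norm_sub_le (φ t) (φ t - φ 0)
      simpa using this
    linarith
  have : ‖φ 0‖ = ∫ t in (0:ℝ)..1, ‖φ 0‖ := by simp
  rw [this]
  have e : ∫ t in (0:ℝ)..1, (‖φ t‖ + ‖φ' t‖) = ∫ t in (0:ℝ)..1, (‖φ t‖ + I) := by
    rw [intervalIntegral.integral_add (hc.norm.intervalIntegrable _ _) (hc'.norm.intervalIntegrable _ _),
      intervalIntegral.integral_add (hc.norm.intervalIntegrable _ _) (by simp)]
    simp [hI]
  rw [e]
  refine intervalIntegral.integral_mono_on zero_le_one (by simp)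
    ((hc.norm.add continuous_const).intervalIntegrable _ _) key

/-- Norm of the j-th derivative. -/
def aj (M : E2 → ℝ) (j : ℕ) (x : E2) : ℝ := ‖iteratedFDeriv ℝ j M x‖

lemma aj_cont {M : E2 → ℝ} (hM : ContDiff ℝ (⊤ : ℕ∞) M) (j : ℕ) : Continuous (aj M j) :=
  (hM.continuous_iteratedFDeriv (m := j) (by exact_mod_cast le_top)).norm

lemma aj_line {M : E2 → ℝ} (hM : ContDiff ℝ (⊤ : ℕ∞) M) (j : ℕ) (x e : E2) (he : ‖e‖ ≤ 1) :
    aj M j x ≤ ∫ t in (0:ℝ)..1, (aj M j (x + t • e) + aj M (j+1) (x + t • e)) := by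
  have hd : Differentiable ℝ (iteratedFDeriv ℝ j M) :=
    hM.differentiable_iteratedFDeriv (by exact_mod_cast WithTop.coe_lt_top _)
  have hline : ∀ t : ℝ, HasDerivAt (fun t : ℝ => x + t • e) e t := by
    intro t
    simpa using ((hasDerivAt_id t).smul_const e).const_add x
  have hφ : ∀ t : ℝ, HasDerivAt (fun t : ℝ => iteratedFDeriv ℝ j M (x + t • e))
      (fderiv ℝ (iteratedFDeriv ℝ j M) (x + t • e) e) t := fun t =>
    (hd _).hasFDerivAt.comp_hasDerivAt t (hline t)
  have hcf : Continuous (fderiv ℝ (iteratedFDeriv ℝ j M)) := by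
    have : ContDiff ℝ 1 (iteratedFDeriv ℝ j M) := hM.iteratedFDeriv_right (i := j) (m := 1) (by exact_mod_cast le_top)
    exact this.continuous_fderiv (by norm_num)
  have hc' : Continuous fun t : ℝ => fderiv ℝ (iteratedFDeriv ℝ j M) (x + t • e) e := by
    have : Continuous fun t : ℝ => x + t • e := by fun_prop
    exact (hcf.comp this).clm_apply continuous_const
  have h1 := one_dim hφ hc'
  simp only [zero_smul, add_zero] at h1
  have hl : Continuous fun t : ℝ => x + t • e := by fun_prop
  refine h1.trans (intervalIntegral.integral_mono_on zero_le_one ?_ ?_ fun t _ => ?_)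
  · refine Continuous.intervalIntegrable ?_ _ _
    exact (((aj_cont hM j).comp hl)).add hc'.norm
  · refine Continuous.intervalIntegrable ?_ _ _
    exact (((aj_cont hM j).comp hl)).add ((aj_cont hM (j+1)).comp hl)
  · refine add_le_add le_rfl ?_
    refine ((fderiv ℝ (iteratedFDeriv ℝ j M) (x + t • e)).le_opNorm e).trans ?_
    rw [norm_fderiv_iteratedFDeriv]
    exact mul_le_of_le_one_right (norm_nonneg _) he

/-- Basis vector of the plane. -/
abbrev e2 (i : Fin 2) : E2 := EuclideanSpace.single i (1:ℝ)

/-- The combination appearing in the Sobolev bound. -/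
def Wj (M : E2 → ℝ) (j : ℕ) (x : E2) : ℝ := aj M j x + 2 * aj M (j+1) x + aj M (j+2) x

lemma aj_square {M : E2 → ℝ} (hM : ContDiff ℝ (⊤ : ℕ∞) M) (j : ℕ) (x : E2) :
    aj M j x ≤ ∫ t in (0:ℝ)..1, ∫ s in (0:ℝ)..1, Wj M j (x + t • e2 0 + s • e2 1) := by
  have hW : Continuous (Wj M j) :=
    ((aj_cont hM j).add (continuous_const.mul (aj_cont hM (j+1)))).add (aj_cont hM (j+2))
  refine (aj_line hM j x (e2 0) (by simp)).trans ?_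
  have hl : Continuous fun t : ℝ => x + t • e2 0 := by fun_prop
  refine intervalIntegral.integral_mono_on zero_le_one ?_ ?_ fun t _ => ?_
  · refine Continuous.intervalIntegrable ?_ _ _
    exact (((aj_cont hM j).comp hl)).add ((aj_cont hM (j+1)).comp hl)
  · refine Continuous.intervalIntegrable ?_ _ _
    refine intervalIntegral.continuous_parametric_intervalIntegral_of_continuous' ?_ _ _
    exact hW.comp (by fun_prop)
  · have a := aj_line hM j (x + t • e2 0) (e2 1) (by simp)
    have b := aj_line hM (j+1) (x + t • e2 0) (e2 1) (by simp)
    have hl : Continuous fun s : ℝ => x + t • e2 0 + s • e2 1 := by fun_prop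
    refine (add_le_add a b).trans (le_of_eq ?_)
    rw [← intervalIntegral.integral_add]
    · refine intervalIntegral.integral_congr fun s _ => ?_
      simp only [Wj]; ring
    · exact Continuous.intervalIntegrable (((aj_cont hM j).comp hl).add ((aj_cont hM (j+1)).comp hl)) _ _
    · exact Continuous.intervalIntegrable (((aj_cont hM (j+1)).comp hl).add ((aj_cont hM (j+2)).comp hl)) _ _

/-- Parametrization of the plane. -/
def pl (x : E2) (z : ℝ × ℝ) : E2 := x + z.1 • e2 0 + z.2 • e2 1

lemma pl_cont (x : E2) : Continuous (pl x) := by unfold pl; fun_prop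

lemma pl_mp (x : E2) : MeasurePreserving (pl x) := by
  have h1 := (volume_preserving_finTwoArrow ℝ).symm
  have h2 := (PiLp.volume_preserving_toLp (Fin 2))
  have h3 := measurePreserving_add_left (volume : Measure E2) x
  have := h3.comp (h2.comp h1)
  have e : pl x = (fun y => x + y) ∘ (WithLp.toLp 2 : (Fin 2 → ℝ) → E2) ∘
      (MeasurableEquiv.finTwoArrow (α := ℝ)).symm := by
    funext z
    unfold pl
    ext i
    fin_cases i <;> simp
  rw [e]
  exact this

lemma pl_emb (x : E2) : MeasurableEmbedding (pl x) := by
  refine (pl_cont x).measurableEmbedding ?_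
  intro z w h
  have h0 := congrArg (fun y : E2 => y 0) h
  have h1 := congrArg (fun y : E2 => y 1) h
  simp [pl] at h0 h1
  exact Prod.ext h0 h1

lemma sob {M : E2 → ℝ} (hM : ContDiff ℝ (⊤ : ℕ∞) M) {κ : ℝ} (hκ : 0 < κ)
    (hi : ∀ j ≤ 9, Integrable fun x' : E2 => ‖iteratedFDeriv ℝ j M x'‖ ^ 2)
    (hb : (∑ j ∈ Finset.range 10, ∫ x' : E2, ‖iteratedFDeriv ℝ j M x'‖ ^ 2) ≤ κ ^ 2)
    {j : ℕ} (hj : j ≤ 7) (x : E2) : ‖iteratedFDeriv ℝ j M x‖ ≤ 20 * κ := by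
  have hW : Continuous (Wj M j) :=
    ((aj_cont hM j).add (continuous_const.mul (aj_cont hM (j+1)))).add (aj_cont hM (j+2))
  have hg : Continuous fun z : ℝ × ℝ => Wj M j (pl x z) := hW.comp (pl_cont x)
  set S : Set (ℝ × ℝ) := Ioc 0 1 ×ˢ Ioc 0 1 with hS
  have hSfin : volume S = 1 := by
    rw [hS, Measure.volume_eq_prod, Measure.prod_prod]; simp
  have hSm : MeasurableSet S := measurableSet_Ioc.prod measurableSet_Ioc
  have hgi : IntegrableOn (fun z : ℝ × ℝ => Wj M j (pl x z)) S := by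
    refine (hg.continuousOn.integrableOn_compact (isCompact_Icc.prod isCompact_Icc)).mono_set
      (prod_mono Ioc_subset_Icc_self Ioc_subset_Icc_self)
  have h1 : aj M j x ≤ ∫ z in S, Wj M j (pl x z) := by
    refine (aj_square hM j x).trans (le_of_eq ?_)
    rw [hS, Measure.volume_eq_prod, setIntegral_prod _ hgi]
    rw [intervalIntegral.integral_of_le zero_le_one]
    refine setIntegral_congr_fun measurableSet_Ioc fun t _ => ?_
    rw [intervalIntegral.integral_of_le zero_le_one]
    rfl
  -- pointwise bounds
  set V : E2 → ℝ := fun y => 12 * (aj M j y ^ 2 + aj M (j+1) y ^ 2 + aj M (j+2) y ^ 2) with hV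
  have hVi : Integrable V := by
    have := (((hi j (by omega)).fun_add (hi (j+1) (by omega))).fun_add (hi (j+2) (by omega))).const_mul 12
    exact this
  have hVb : ∫ y, V y ≤ 12 * κ ^ 2 := by
    have hi : ∀ j ≤ 9, Integrable fun x => aj M j x ^ 2 := hi
    rw [hV, integral_const_mul]
    refine mul_le_mul_of_nonneg_left ?_ (by norm_num)
    rw [integral_add ((hi j (by omega)).fun_add (hi (j+1) (by omega))) (hi (j+2) (by omega)),
      integral_add (hi j (by omega)) (hi (j+1) (by omega))]
    refine le_trans ?_ hb
    have : ∑ i ∈ ({j, j+1, j+2} : Finset ℕ), ∫ x' : E2, ‖iteratedFDeriv ℝ i M x'‖ ^ 2 ≤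
        ∑ j ∈ Finset.range 10, ∫ x' : E2, ‖iteratedFDeriv ℝ j M x'‖ ^ 2 := by
      refine Finset.sum_le_sum_of_subset_of_nonneg ?_ fun i _ _ => integral_nonneg fun _ => sq_nonneg _
      intro i hi
      simp only [Finset.mem_insert, Finset.mem_singleton] at hi
      rw [Finset.mem_range]; omega
    rw [Finset.sum_insert (by simp), Finset.sum_insert (by simp), Finset.sum_singleton] at this
    unfold aj
    linarith
  have hVc : Integrable fun z : ℝ × ℝ => V (pl x z) :=
    ((pl_mp x).integrable_comp_emb (pl_emb x)).2 hVi
  have hVt : ∫ z in S, V (pl x z) ≤ 12 * κ ^ 2 := by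
    refine (setIntegral_le_integral hVc (Eventually.of_forall fun z => ?_)).trans ?_
    · simp only [hV, Pi.zero_apply]; positivity
    · rw [(pl_mp x).integral_comp (pl_emb x)]; exact hVb
  have h2 : ∫ z in S, Wj M j (pl x z) ≤ ∫ z in S, (κ⁻¹ * V (pl x z) + κ) := by
    refine setIntegral_mono_on hgi ?_ hSm fun z _ => ?_
    · exact ((hVc.const_mul _).integrableOn).add (integrableOn_const (by rw [hSfin]; simp))
    · set y := pl x z
      have a0 : 0 ≤ aj M j y := norm_nonneg _
      have hw : Wj M j y ^ 2 ≤ V y := by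
        simp only [hV, Wj]
        nlinarith [sq_nonneg (aj M j y - aj M (j+1) y), sq_nonneg (aj M j y - aj M (j+2) y),
          sq_nonneg (aj M (j+1) y - aj M (j+2) y), sq_nonneg (aj M j y), sq_nonneg (aj M (j+1) y), sq_nonneg (aj M (j+2) y)]
      have : Wj M j y ≤ κ⁻¹ * Wj M j y ^ 2 + κ := by
        have e : κ⁻¹ * Wj M j y ^ 2 + κ - Wj M j y = κ⁻¹ * ((Wj M j y - κ/2) ^ 2 + 3/4 * κ ^ 2) := by
          field_simp; ring
        have : 0 ≤ κ⁻¹ * ((Wj M j y - κ/2) ^ 2 + 3/4 * κ ^ 2) := by positivity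
        linarith
      have := mul_le_mul_of_nonneg_left hw (inv_pos.2 hκ).le
      linarith
  have h3 : ∫ z in S, (κ⁻¹ * V (pl x z) + κ) = κ⁻¹ * (∫ z in S, V (pl x z)) + κ := by
    rw [integral_add ((hVc.const_mul _).integrableOn) (integrableOn_const (by rw [hSfin]; simp)),
      integral_const_mul]
    simp [Measure.real, hSfin]
  have h4 : κ⁻¹ * (∫ z in S, V (pl x z)) ≤ κ⁻¹ * (12 * κ ^ 2) :=
    mul_le_mul_of_nonneg_left hVt (inv_pos.2 hκ).le
  have h5 : κ⁻¹ * (12 * κ ^ 2) = 12 * κ := by field_simp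
  have : aj M j x = ‖iteratedFDeriv ℝ j M x‖ := rfl
  linarith

/-- Shear along the first axis. -/
def Sh (f : E3 → ℝ) (x : E3) : E3 := x + f x • ee 0

lemma Sh_contDiff {f : E3 → ℝ} {n : WithTop ℕ∞} (hf : ContDiff ℝ n f) : ContDiff ℝ n (Sh f) := by
  unfold Sh; fun_prop

lemma Sh_fderiv {f : E3 → ℝ} (hf : ContDiff ℝ (⊤ : ℕ∞) f) (x : E3) :
    HasFDerivAt (Sh f) (rk (fderiv ℝ f x)) x := by
  have h1 : HasFDerivAt f (fderiv ℝ f x) x := (hf.differentiable (by simp) x).hasFDerivAt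
  exact (hasFDerivAt_id x).add (h1.smul_const (ee 0))

lemma id_bd (i : ℕ) (hi : 1 ≤ i) (x : E3) : ‖iteratedFDeriv ℝ i (fun y : E3 => y) x‖ ≤ 1 := by
  obtain ⟨j, rfl⟩ : ∃ j, i = j + 1 := ⟨i - 1, by omega⟩
  rw [← norm_iteratedFDeriv_fderiv]
  have : fderiv ℝ (fun y : E3 => y) = fun _ => ContinuousLinearMap.id ℝ E3 := by
    funext y; exact fderiv_fun_id
  rw [this]
  rcases Nat.eq_zero_or_pos j with rfl | hj
  · rw [norm_iteratedFDeriv_zero]; exact ContinuousLinearMap.norm_id_le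
  · rw [iteratedFDeriv_const_of_ne (by omega)]; simp

lemma Sh_bd {f : E3 → ℝ} (hf : ContDiff ℝ (⊤ : ℕ∞) f) {i : ℕ} (hi : 1 ≤ i) {x : E3}
    (hb : ‖iteratedFDeriv ℝ i f x‖ ≤ 1) : ‖iteratedFDeriv ℝ i (Sh f) x‖ ≤ 2 ^ i := by
  have hfi : ContDiff ℝ i f := hf.of_le (by exact_mod_cast le_top)
  have e : Sh f = fun y => y + ((ContinuousLinearMap.toSpanSingleton ℝ (ee 0)) ∘ f) y := by
    funext y; simp [Sh]
  rw [e, fun_iteratedFDeriv_add_apply (f := fun y : E3 => y) contDiffAt_id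
    ((ContinuousLinearMap.contDiff _).comp hfi).contDiffAt]
  have h1 := id_bd i hi x
  have h2 := (ContinuousLinearMap.toSpanSingleton ℝ (ee 0)).norm_iteratedFDeriv_comp_left
    (hfi.contDiffAt (x := x)) (n := i) le_rfl
  have h3 : ‖ContinuousLinearMap.toSpanSingleton ℝ (ee 0)‖ = 1 := by
    rw [ContinuousLinearMap.norm_toSpanSingleton]; simp
  rw [h3, one_mul] at h2
  have h4 : (2:ℝ) ≤ 2 ^ i := by
    calc (2:ℝ) = 2 ^ 1 := by norm_num
      _ ≤ 2 ^ i := pow_le_pow_right₀ (by norm_num) hi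
  refine (norm_add_le _ _).trans ?_
  linarith

/-- Index set of derivatives in the composition bound. -/
def Ix (n : ℕ) : Finset ℕ := Finset.Icc (min 1 n) n

lemma comp_bd {S T : Set E3} (hS : IsOpen S) (hT : IsOpen T) {f g : E3 → ℝ} {n : ℕ}
    (hg : ContDiffOn ℝ n g T) (hf : ContDiff ℝ (⊤ : ℕ∞) f)
    (hb : ∀ i ≤ n, ∀ x, ‖iteratedFDeriv ℝ i f x‖ ≤ 1) (hm : MapsTo (Sh f) S T)
    {x : E3} (hx : x ∈ S) :
    ‖iteratedFDeriv ℝ n (g ∘ Sh f) x‖ ≤ n.factorial * 2 ^ n *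
      ∑ j ∈ Ix n, ‖iteratedFDeriv ℝ j g (Sh f x)‖ := by
  rcases Nat.eq_zero_or_pos n with rfl | hn
  · simp [Ix]
  set c := g (Sh f x) with hc
  have hf' : ContDiffOn ℝ n (Sh f) S := (Sh_contDiff (hf.of_le (by exact_mod_cast le_top))).contDiffOn
  have hTx : Sh f x ∈ T := hm hx
  have hgx : ContDiffAt ℝ n g (Sh f x) := hg.contDiffAt (hT.mem_nhds hTx)
  have key := norm_iteratedFDerivWithin_comp_le (g := fun y => g y - c) (f := Sh f) (n := n)
    (s := S) (t := T) (x := x) (N := n) (hg.sub contDiffOn_const) hf' le_rfl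
    hT.uniqueDiffOn hS.uniqueDiffOn hm hx
    (C := ∑ j ∈ Ix n, ‖iteratedFDeriv ℝ j g (Sh f x)‖) (D := 2) ?_ ?_
  · rw [iteratedFDerivWithin_of_isOpen n hS hx] at key
    have e : (fun y => g y - c) ∘ Sh f = fun y => (g ∘ Sh f) y - c := rfl
    rw [e] at key
    have hgs : ContDiffAt ℝ n (g ∘ Sh f) x := hgx.comp x
      (Sh_contDiff (hf.of_le (by exact_mod_cast le_top))).contDiffAt
    rw [fun_iteratedFDeriv_sub_apply hgs contDiffAt_const,
      iteratedFDeriv_const_of_ne (by omega)] at key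
    simp only [Pi.zero_apply, sub_zero] at key
    refine key.trans (le_of_eq (by ring))
  · intro i hi
    rw [iteratedFDerivWithin_of_isOpen i hT hTx]
    rcases Nat.eq_zero_or_pos i with rfl | hi0
    · rw [norm_iteratedFDeriv_zero, hc, sub_self, norm_zero]
      exact Finset.sum_nonneg fun _ _ => norm_nonneg _
    · rw [fun_iteratedFDeriv_sub_apply (hgx.of_le (by exact_mod_cast hi)) contDiffAt_const,
        iteratedFDeriv_const_of_ne (by omega)]
      simp only [Pi.zero_apply, sub_zero]
      exact Finset.single_le_sum (f := fun j => ‖iteratedFDeriv ℝ j g (Sh f x)‖)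
        (fun _ _ => norm_nonneg _) (by simp only [Ix, Finset.mem_Icc]; omega)
  · intro i h1 hi
    rw [iteratedFDerivWithin_of_isOpen i hS hx]
    exact Sh_bd hf h1 (hb i hi x)

/-- Constant in the composition bound. -/
def Kn (n : ℕ) : ℝ := (n.factorial * 2 ^ n) ^ 2 * (n + 1)

lemma Kn_pos (n : ℕ) : 0 < Kn n := by
  unfold Kn
  have := Nat.factorial_pos n
  positivity

lemma Ix_card (n : ℕ) : ((Ix n).card : ℝ) ≤ n + 1 := by
  have : (Ix n).card ≤ n + 1 := by simp [Ix]
  exact_mod_cast this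

lemma comp_sq {S T : Set E3} (hS : IsOpen S) (hT : IsOpen T) {f g : E3 → ℝ} {n : ℕ}
    (hg : ContDiffOn ℝ n g T) (hf : ContDiff ℝ (⊤ : ℕ∞) f)
    (hb : ∀ i ≤ n, ∀ x, ‖iteratedFDeriv ℝ i f x‖ ≤ 1) (hm : MapsTo (Sh f) S T)
    {x : E3} (hx : x ∈ S) :
    ‖iteratedFDeriv ℝ n (g ∘ Sh f) x‖ ^ 2 ≤ Kn n *
      ∑ j ∈ Ix n, ‖iteratedFDeriv ℝ j g (Sh f x)‖ ^ 2 := by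
  have h := pow_le_pow_left₀ (norm_nonneg _) (comp_bd hS hT hg hf hb hm hx) 2
  have h2 := sq_sum_le_card_mul_sum_sq (s := Ix n) (f := fun j => ‖iteratedFDeriv ℝ j g (Sh f x)‖)
  refine h.trans ?_
  rw [mul_pow]
  unfold Kn
  rw [mul_assoc]
  refine mul_le_mul_of_nonneg_left (h2.trans ?_) (sq_nonneg _)
  exact mul_le_mul_of_nonneg_right (Ix_card n) (Finset.sum_nonneg fun _ _ => sq_nonneg _)

/-- Invariance along the first axis. -/
def Inv0 (f : E3 → ℝ) : Prop := ∀ (x : E3) (t : ℝ), f (x + t • ee 0) = f x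

lemma Inv0.neg {f : E3 → ℝ} (h : Inv0 f) : Inv0 (fun x => - f x) := fun x t => congrArg Neg.neg (h x t)

lemma Sh_Sh {f g : E3 → ℝ} (h : Inv0 g) (hfg : ∀ x, g x = - f x) (x : E3) : Sh g (Sh f x) = x := by
  unfold Sh
  rw [h x (f x), hfg x]; simp

lemma Inv0.fderiv {f : E3 → ℝ} (h : Inv0 f) (hf : ContDiff ℝ (⊤ : ℕ∞) f) (x : E3) :
    fderiv ℝ f x (ee 0) = 0 := by
  have h1 : HasFDerivAt f (_root_.fderiv ℝ f x) (x + (0:ℝ) • ee 0) := by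
    simpa using (hf.differentiable (by simp) x).hasFDerivAt
  have hl : HasDerivAt (fun t : ℝ => x + t • ee 0) (ee 0) 0 := by
    simpa using ((hasDerivAt_id (0:ℝ)).smul_const (ee 0)).const_add x
  have h2 := h1.comp_hasDerivAt 0 hl
  have e : f ∘ (fun t : ℝ => x + t • ee 0) = fun _ => f x := funext fun t => h x t
  rw [e] at h2
  exact h2.unique (hasDerivAt_const _ _)

lemma Sh_bij {f : E3 → ℝ} (h : Inv0 f) : Function.Bijective (Sh f) := by
  refine ⟨Function.LeftInverse.injective (g := Sh fun x => - f x) fun x => Sh_Sh h.neg (fun _ => rfl) x,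
    Function.RightInverse.surjective (g := Sh fun x => - f x) fun x => Sh_Sh h (fun _ => by simp) x⟩

lemma Sh_emb {f : E3 → ℝ} (h : Inv0 f) (hf : ContDiff ℝ (⊤ : ℕ∞) f) :
    MeasurableEmbedding (Sh f) :=
  (Sh_contDiff hf).continuous.measurableEmbedding (Sh_bij h).1

lemma Sh_mp {f : E3 → ℝ} (h : Inv0 f) (hf : ContDiff ℝ (⊤ : ℕ∞) f) :
    MeasurePreserving (Sh f) := by
  refine ⟨(Sh_contDiff hf).continuous.measurable, ?_⟩
  ext t ht
  have hm := (Sh_contDiff hf).continuous.measurable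
  rw [Measure.map_apply hm ht]
  have := lintegral_abs_det_fderiv_eq_addHaar_image volume (hm ht)
    (f' := fun x => rk (fderiv ℝ f x)) (fun x _ => (Sh_fderiv hf x).hasFDerivWithinAt)
    (Sh_bij h).1.injOn
  rw [image_preimage_eq _ (Sh_bij h).2] at this
  rw [← this]
  simp [rk_det, h.fderiv hf]

lemma pull {S T : Set E3} (hS : IsOpen S) (hT : IsOpen T) {f g : E3 → ℝ} {n : ℕ}
    (hg : ContDiffOn ℝ n g T) (hf : ContDiff ℝ (⊤ : ℕ∞) f) (h0 : Inv0 f)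
    (hb : ∀ i ≤ n, ∀ x, ‖iteratedFDeriv ℝ i f x‖ ≤ 1) (hm : S = Sh f ⁻¹' T)
    (hi : ∀ j ∈ Ix n, IntegrableOn (fun x => ‖iteratedFDeriv ℝ j g x‖ ^ 2) T) :
    IntegrableOn (fun x => ‖iteratedFDeriv ℝ n (g ∘ Sh f) x‖ ^ 2) S ∧
    ∫ x in S, ‖iteratedFDeriv ℝ n (g ∘ Sh f) x‖ ^ 2 ≤
      Kn n * ∑ j ∈ Ix n, ∫ x in T, ‖iteratedFDeriv ℝ j g x‖ ^ 2 := by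
  have hmt : MapsTo (Sh f) S T := by rw [hm]; exact fun x hx => hx
  have hi' : ∀ j ∈ Ix n, IntegrableOn (fun x => ‖iteratedFDeriv ℝ j g (Sh f x)‖ ^ 2) S := by
    intro j hj
    rw [hm]
    exact ((Sh_mp h0 hf).integrableOn_comp_preimage (Sh_emb h0 hf)).2 (hi j hj)
  have he : ∀ j ∈ Ix n, ∫ x in S, ‖iteratedFDeriv ℝ j g (Sh f x)‖ ^ 2 =
      ∫ x in T, ‖iteratedFDeriv ℝ j g x‖ ^ 2 := by
    intro j hj
    rw [hm]
    exact (Sh_mp h0 hf).setIntegral_preimage_emb (Sh_emb h0 hf)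
      (fun y => ‖iteratedFDeriv ℝ j g y‖ ^ 2) T
  have hI : IntegrableOn (fun x => Kn n * ∑ j ∈ Ix n, ‖iteratedFDeriv ℝ j g (Sh f x)‖ ^ 2) S :=
    (integrable_finsetSum _ hi').const_mul _
  have hgs : ContDiffOn ℝ n (g ∘ Sh f) S :=
    hg.comp (Sh_contDiff (hf.of_le (by exact_mod_cast le_top))).contDiffOn hmt
  have hc : ContinuousOn (fun x => ‖iteratedFDeriv ℝ n (g ∘ Sh f) x‖ ^ 2) S := by
    have := (hgs.continuousOn_iteratedFDerivWithin (m := n) le_rfl hS.uniqueDiffOn).norm.pow 2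
    refine this.congr fun x hx => ?_
    rw [Pi.pow_apply, iteratedFDerivWithin_of_isOpen n hS hx]
  have h1 : IntegrableOn (fun x => ‖iteratedFDeriv ℝ n (g ∘ Sh f) x‖ ^ 2) S := by
    refine Integrable.mono' hI (hc.aestronglyMeasurable hS.measurableSet) ?_
    refine (ae_restrict_iff' hS.measurableSet).2 (Eventually.of_forall fun x hx => ?_)
    rw [Real.norm_of_nonneg (sq_nonneg _)]
    exact comp_sq hS hT hg hf hb hmt hx
  refine ⟨h1, ?_⟩
  refine (setIntegral_mono_on h1 hI hS.measurableSet fun x hx =>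
    comp_sq hS hT hg hf hb hmt hx).trans (le_of_eq ?_)
  rw [integral_const_mul, integral_finsetSum _ hi', Finset.sum_congr rfl he]

/-- Tangential projection as a continuous linear map. -/
def pr : E3 →L[ℝ] E2 := LinearMap.toContinuousLinearMap
  { toFun := proj2
    map_add' := fun x y => by ext i; fin_cases i <;> simp [proj2]
    map_smul' := fun c x => by ext i; fin_cases i <;> simp [proj2] }

lemma pr_apply (x : E3) : pr x = proj2 x := rfl

lemma pr_ee : pr (ee 0) = 0 := by
  rw [pr_apply]; ext i; fin_cases i <;> simp [proj2]

lemma pr_norm : ‖pr‖ ≤ 1 := by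
  refine ContinuousLinearMap.opNorm_le_bound _ zero_le_one fun x => ?_
  rw [one_mul, pr_apply, EuclideanSpace.norm_eq, EuclideanSpace.norm_eq]
  refine Real.sqrt_le_sqrt ?_
  simp [proj2, Fin.sum_univ_two, Fin.sum_univ_three]
  nlinarith [sq_nonneg (x 0)]

/-- The height function as a function on space. -/
def Mt (M : E2 → ℝ) : E3 → ℝ := M ∘ pr

lemma Mt_contDiff {M : E2 → ℝ} (hM : ContDiff ℝ (⊤ : ℕ∞) M) : ContDiff ℝ (⊤ : ℕ∞) (Mt M) :=
  hM.comp pr.contDiff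

lemma Mt_inv (M : E2 → ℝ) : Inv0 (Mt M) := by
  intro x t
  simp only [Mt, Function.comp, map_add, map_smul, pr_ee, smul_zero, add_zero]

lemma Mt_bd {M : E2 → ℝ} (hM : ContDiff ℝ (⊤ : ℕ∞) M) (j : ℕ) (x : E3) :
    ‖iteratedFDeriv ℝ j (Mt M) x‖ ≤ ‖iteratedFDeriv ℝ j M (pr x)‖ := by
  unfold Mt
  rw [pr.iteratedFDeriv_comp_right hM x (i := j) (by exact_mod_cast le_top)]
  refine (ContinuousMultilinearMap.norm_compContinuousLinearMap_le _ _).trans ?_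
  refine mul_le_of_le_one_right (norm_nonneg _) ?_
  exact Finset.prod_le_one (fun _ _ => norm_nonneg _) fun _ _ => pr_norm

lemma Sh_coord0 (f : E3 → ℝ) (x : E3) : (Sh f x) 0 = x 0 + f x := by simp [Sh]

lemma pr_Sh (f : E3 → ℝ) (x : E3) : pr (Sh f x) = pr x := by
  simp only [Sh, map_add, map_smul, pr_ee, smul_zero, add_zero]

lemma mem_Omg (M : E2 → ℝ) (x : E3) : x ∈ Omg M ↔ Mt M x < x 0 := Iff.rfl

lemma pre1 (M : E2 → ℝ) : Ho = Sh (Mt M) ⁻¹' Omg M := by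
  ext x
  rw [mem_preimage, mem_Omg, Sh_coord0, mem_Ho]
  have : Mt M (Sh (Mt M) x) = Mt M x := by unfold Mt; simp [Function.comp, pr_Sh]
  rw [this]
  constructor <;> intro h <;> linarith

lemma pre2 (M : E2 → ℝ) : Omg M = Sh (fun x => - Mt M x) ⁻¹' Ho := by
  ext x
  rw [mem_preimage, mem_Omg, mem_Ho, Sh_coord0]
  constructor <;> intro h <;> linarith

lemma Omg_open {M : E2 → ℝ} (hM : ContDiff ℝ (⊤ : ℕ∞) M) : IsOpen (Omg M) :=
  isOpen_lt (Mt_contDiff hM).continuous (cont_coord 0)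

lemma Kc_cl {x : E3} (hx : x ∈ Kc) : x ∈ closure Ho := by
  have ht : Tendsto (fun t : ℝ => x + t • ee 0) (nhdsWithin 0 (Ioi 0)) (nhds x) := by
    have : Continuous fun t : ℝ => x + t • ee 0 := by fun_prop
    have h := this.tendsto 0
    simp only [zero_smul, add_zero] at h
    exact h.mono_left nhdsWithin_le_nhds
  refine mem_closure_of_tendsto ht ?_
  filter_upwards [self_mem_nhdsWithin] with t ht
  rw [mem_Ho]
  have h1 := mem_Kc.1 hx
  have h2 : 0 < t := ht
  simp; linarith

lemma Kc_maps {M : E2 → ℝ} (hM : ContDiff ℝ (⊤ : ℕ∞) M) :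
    MapsTo (Sh (Mt M)) Kc (closure (Omg M)) := by
  intro x hx
  have h : MapsTo (Sh (Mt M)) Ho (Omg M) := by
    intro y hy; rw [pre1 M] at hy; exact hy
  exact h.closure (Sh_contDiff (Mt_contDiff hM)).continuous (Kc_cl hx)

lemma Sh_gph (M : E2 → ℝ) {x : E3} (hx : x 0 = 0) : Sh (Mt M) x = gph M (proj2 x) := by
  ext i
  fin_cases i
  · simp [Sh, gph, hx, Mt, pr_apply]
  · simp [Sh, gph, proj2]
  · simp [Sh, gph, proj2]

/-- Slopes. -/
def mM (M : E2 → ℝ) (i : Fin 3) : E3 → ℝ := P i (Mt M)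

lemma chain {M : E2 → ℝ} (hM : ContDiff ℝ (⊤ : ℕ∞) M) {g : E3 → ℝ}
    (hg : ∀ x ∈ Omg M, DifferentiableAt ℝ g x) (i : Fin 3) :
    ∀ y ∈ Ho, Td (mM M) i (g ∘ Sh (Mt M)) y = pd i g (Sh (Mt M) y) := by
  intro y hy
  have hy' : Sh (Mt M) y ∈ Omg M := by rw [pre1 M] at hy; exact hy
  have hd := (hg _ hy').hasFDerivAt.comp y (Sh_fderiv (Mt_contDiff hM) y)
  unfold Td mM
  rw [P_eq hy, P_eq hy, P_eq hy]
  have e : ∀ j, pd j (g ∘ Sh (Mt M)) y = pd j g (Sh (Mt M) y) +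
      pd j (Mt M) y * pd 0 g (Sh (Mt M) y) := by
    intro j
    unfold pd
    rw [hd.fderiv, ContinuousLinearMap.comp_apply, rk_apply, map_add, map_smul]
    rfl
  have e0 : pd 0 (Mt M) y = 0 := (Mt_inv M).fderiv (Mt_contDiff hM) y
  rw [e i, e 0, e0]
  ring

lemma Td_congr {m : Fin 3 → E3 → ℝ} {i : Fin 3} {f g : E3 → ℝ} (h : ∀ x ∈ Ho, f x = g x) :
    ∀ x ∈ Ho, Td m i f x = Td m i g x := by
  intro x hx
  unfold Td
  rw [P_congr h x hx, P_congr h x hx]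

lemma pd_contDiffOn {T : Set E3} (hT : IsOpen T) {n : ℕ} {g : E3 → ℝ}
    (hg : ContDiffOn ℝ ((n + 1 : ℕ)) g T) (i : Fin 3) : ContDiffOn ℝ n (pd i g) T := by
  have h1 := hg.fderiv_of_isOpen (m := n) hT (by push_cast; rfl)
  exact h1.clm_apply contDiffOn_const

lemma diffAt {T : Set E3} (hT : IsOpen T) {n : ℕ} {g : E3 → ℝ}
    (hg : ContDiffOn ℝ ((n + 1 : ℕ)) g T) : ∀ x ∈ T, DifferentiableAt ℝ g x := fun x hx =>
  (hg.contDiffAt (hT.mem_nhds hx)).differentiableAt (by simp)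

/-- Coordinate. -/
def cp (i : Fin 3) : E3 →L[ℝ] ℝ := EuclideanSpace.proj i

lemma cp_norm (i : Fin 3) : ‖cp i‖ ≤ 1 :=
  ContinuousLinearMap.opNorm_le_bound _ zero_le_one fun x => by
    rw [one_mul]; exact PiLp.norm_apply_le x i

lemma comp_contDiffOn {T : Set E3} {n : WithTop ℕ∞} {u : E3 → E3} (hu : ContDiffOn ℝ n u T) (i : Fin 3) :
    ContDiffOn ℝ n (fun y => u y i) T := (cp i).contDiff.comp_contDiffOn hu

lemma comp_le {u : E3 → E3} {n : ℕ} {x : E3} (hu : ContDiffAt ℝ n u x) (i : Fin 3) :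
    ‖iteratedFDeriv ℝ n (fun y => u y i) x‖ ≤ ‖iteratedFDeriv ℝ n u x‖ := by
  refine ((cp i).norm_iteratedFDeriv_comp_left hu (n := n) le_rfl).trans ?_
  exact mul_le_of_le_one_left (norm_nonneg _) (cp_norm i)

lemma norm_le_sum (w : E3) : ‖w‖ ≤ ∑ i, |w i| := by
  rw [EuclideanSpace.norm_eq]
  refine Real.sqrt_le_iff.2 ⟨Finset.sum_nonneg fun _ _ => abs_nonneg _, ?_⟩
  exact Finset.sum_sq_le_sq_sum_of_nonneg fun _ _ => abs_nonneg _

lemma le_comp {u : E3 → E3} {n : ℕ} {x : E3} (hu : ContDiffAt ℝ n u x) :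
    ‖iteratedFDeriv ℝ n u x‖ ≤ ∑ i, ‖iteratedFDeriv ℝ n (fun y => u y i) x‖ := by
  refine ContinuousMultilinearMap.opNorm_le_bound (Finset.sum_nonneg fun _ _ => norm_nonneg _) fun z => ?_
  refine (norm_le_sum _).trans ?_
  rw [Finset.sum_mul]
  refine Finset.sum_le_sum fun i _ => ?_
  have e := (cp i).iteratedFDeriv_comp_left hu (i := n) le_rfl
  have : (iteratedFDeriv ℝ n u x z) i = iteratedFDeriv ℝ n (fun y => u y i) x z := by
    change _ = iteratedFDeriv ℝ n (cp i ∘ u) x z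
    rw [e]; rfl
  rw [this]
  exact (iteratedFDeriv ℝ n (fun y => u y i) x).le_opNorm z

lemma cont_D {V : Type*} [NormedAddCommGroup V] [NormedSpace ℝ V] {T : Set E3} (hT : IsOpen T)
    {n : ℕ} {g : E3 → V} (hg : ContDiffOn ℝ n g T) {j : ℕ} (hj : j ≤ n) :
    ContinuousOn (fun x => ‖iteratedFDeriv ℝ j g x‖ ^ 2) T := by
  have := (hg.continuousOn_iteratedFDerivWithin (m := j) (by exact_mod_cast hj) hT.uniqueDiffOn).norm.pow 2
  refine this.congr fun x hx => ?_
  rw [Pi.pow_apply, iteratedFDerivWithin_of_isOpen j hT hx]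

/-- Component integrals are controlled. -/
lemma comp_int {T : Set E3} (hT : IsOpen T) {n : ℕ} {u : E3 → E3} (hu : ContDiffOn ℝ n u T)
    {j : ℕ} (hj : j ≤ n) (hi : IntegrableOn (fun x => ‖iteratedFDeriv ℝ j u x‖ ^ 2) T) (i : Fin 3) :
    IntegrableOn (fun x => ‖iteratedFDeriv ℝ j (fun y => u y i) x‖ ^ 2) T ∧
    ∫ x in T, ‖iteratedFDeriv ℝ j (fun y => u y i) x‖ ^ 2 ≤ ∫ x in T, ‖iteratedFDeriv ℝ j u x‖ ^ 2 := by
  have hle : ∀ x ∈ T, ‖iteratedFDeriv ℝ j (fun y => u y i) x‖ ^ 2 ≤ ‖iteratedFDeriv ℝ j u x‖ ^ 2 :=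
    fun x hx => pow_le_pow_left₀ (norm_nonneg _)
      (comp_le ((hu.contDiffAt (hT.mem_nhds hx)).of_le (by exact_mod_cast hj)) i) 2
  have h1 : IntegrableOn (fun x => ‖iteratedFDeriv ℝ j (fun y => u y i) x‖ ^ 2) T := by
    refine Integrable.mono' hi ((cont_D hT (comp_contDiffOn hu i) hj).aestronglyMeasurable hT.measurableSet) ?_
    refine (ae_restrict_iff' hT.measurableSet).2 (Eventually.of_forall fun x hx => ?_)
    rw [Real.norm_of_nonneg (sq_nonneg _)]
    exact hle x hx
  exact ⟨h1, setIntegral_mono_on h1 hi hT.measurableSet hle⟩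

lemma int_comp {T : Set E3} (hT : IsOpen T) {n : ℕ} {u : E3 → E3} (hu : ContDiffOn ℝ n u T)
    {j : ℕ} (hj : j ≤ n) (hi : IntegrableOn (fun x => ‖iteratedFDeriv ℝ j u x‖ ^ 2) T) :
    ∫ x in T, ‖iteratedFDeriv ℝ j u x‖ ^ 2 ≤
      3 * ∑ i : Fin 3, ∫ x in T, ‖iteratedFDeriv ℝ j (fun y => u y i) x‖ ^ 2 := by
  have hc := fun i => (comp_int hT hu hj hi i).1
  rw [← integral_finsetSum _ (fun i _ => hc i), ← integral_const_mul]
  refine setIntegral_mono_on hi ((integrable_finsetSum _ (fun i _ => hc i)).const_mul _)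
    hT.measurableSet fun x hx => ?_
  have h := pow_le_pow_left₀ (norm_nonneg _)
    (le_comp ((hu.contDiffAt (hT.mem_nhds hx)).of_le (by exact_mod_cast hj : (j : WithTop ℕ∞) ≤ n))) 2
  refine h.trans ?_
  have := sq_sum_le_card_mul_sum_sq (s := Finset.univ)
    (f := fun i : Fin 3 => ‖iteratedFDeriv ℝ j (fun y => u y i) x‖)
  simpa using this

lemma N_eq (n : ℕ) (f : E3 → ℝ) : N n f = ∫ x in Ho, ‖iteratedFDeriv ℝ n f x‖ ^ 2 := by
  unfold N
  exact setIntegral_congr_fun measSet_Ho fun x hx => by simp only [dn_eq hx]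

lemma Ix_sub (n : ℕ) : Ix n ⊆ Finset.range (n + 1) := by
  intro j hj
  simp only [Ix, Finset.mem_Icc] at hj
  rw [Finset.mem_range]; omega

lemma fwd {M : E2 → ℝ} (hM : ContDiff ℝ (⊤ : ℕ∞) M) {n : ℕ}
    (hb : ∀ i ≤ n, ∀ x, ‖iteratedFDeriv ℝ i (Mt M) x‖ ≤ 1) {g : E3 → ℝ}
    (hg : ContDiffOn ℝ n g (Omg M))
    (hi : ∀ j ≤ n, IntegrableOn (fun x => ‖iteratedFDeriv ℝ j g x‖ ^ 2) (Omg M)) :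
    IntegrableOn (fun x => dn n (g ∘ Sh (Mt M)) x ^ 2) Ho ∧
    N n (g ∘ Sh (Mt M)) ≤ Kn n * ∑ j ∈ Ix n, ∫ x in Omg M, ‖iteratedFDeriv ℝ j g x‖ ^ 2 := by
  have h := pull isOpen_Ho (Omg_open hM) hg (Mt_contDiff hM) (Mt_inv M) hb (pre1 M)
    (fun j hj => hi j (by have := Finset.mem_range.1 (Ix_sub n hj); omega))
  rw [N_eq]
  refine ⟨h.1.congr_fun (fun x hx => ?_) measSet_Ho, h.2⟩
  simp only [dn_eq hx]

lemma fwdR {M : E2 → ℝ} (hM : ContDiff ℝ (⊤ : ℕ∞) M) {n : ℕ}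
    (hb : ∀ i ≤ n, ∀ x, ‖iteratedFDeriv ℝ i (Mt M) x‖ ≤ 1) {g : E3 → ℝ}
    (hg : ContDiffOn ℝ n g (closure (Omg M)))
    (hi : ∀ j ≤ n, IntegrableOn (fun x => ‖iteratedFDeriv ℝ j g x‖ ^ 2) (Omg M)) :
    Reg n (g ∘ Sh (Mt M)) := by
  refine ⟨hg.comp (Sh_contDiff ((Mt_contDiff hM).of_le (by exact_mod_cast le_top))).contDiffOn
    (Kc_maps hM), fun j hj => ?_⟩
  exact (fwd hM (n := j) (fun i hij => hb i (hij.trans hj))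
    ((hg.mono subset_closure).of_le (by exact_mod_cast hj)) fun l hl => hi l (hl.trans hj)).1

lemma back {M : E2 → ℝ} (hM : ContDiff ℝ (⊤ : ℕ∞) M) {n : ℕ}
    (hb : ∀ i ≤ n, ∀ x, ‖iteratedFDeriv ℝ i (Mt M) x‖ ≤ 1) {g : E3 → ℝ}
    (hR : Reg n (g ∘ Sh (Mt M))) :
    ∫ x in Omg M, ‖iteratedFDeriv ℝ n g x‖ ^ 2 ≤ Kn n * ∑ j ∈ Ix n, N j (g ∘ Sh (Mt M)) := by
  have h := pull (Omg_open hM) isOpen_Ho (hR.1.mono Ho_sub) (f := fun x => - Mt M x)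
    (Mt_contDiff hM).neg (Mt_inv M).neg (fun i hi x => ?_) (pre2 M)
    (fun j hj => ?_)
  · have e : (g ∘ Sh (Mt M)) ∘ Sh (fun x => - Mt M x) = g := by
      funext x
      simp only [Function.comp]
      rw [Sh_Sh (Mt_inv M) (fun x => by simp)]
    rw [e] at h
    simp only [N_eq]
    exact h.2
  · have : (fun x => - Mt M x) = - Mt M := rfl
    rw [this, iteratedFDeriv_neg_apply, norm_neg]
    exact hb i hi x
  · have := hR.2 j (by have := Finset.mem_range.1 (Ix_sub n hj); omega)
    refine this.congr_fun (fun x hx => ?_) measSet_Ho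
    simp only [dn_eq hx]

/-- Total composition constant. -/
def KK (k : ℕ) : ℝ := ∑ n ∈ Finset.range (k + 3), Kn n

lemma KK_pos (k : ℕ) : 0 < KK k := Finset.sum_pos (fun n _ => Kn_pos n) ⟨0, by simp⟩

lemma Kn_le {n k : ℕ} (h : n ≤ k + 2) : Kn n ≤ KK k :=
  Finset.single_le_sum (f := Kn) (fun n _ => (Kn_pos n).le) (Finset.mem_range.2 (by omega))

lemma mM_small {M : E2 → ℝ} (hM : ContDiff ℝ (⊤ : ℕ∞) M) {k : ℕ} {ε : ℝ}
    (hb : ∀ i ≤ k + 2, ∀ x, ‖iteratedFDeriv ℝ i (Mt M) x‖ ≤ ε) (i : Fin 3) :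
    SmallC (k + 1) ε (mM M i) := by
  have hc : ∀ n : ℕ, ContDiffOn ℝ n (Mt M) Kc := fun n =>
    ((Mt_contDiff hM).of_le (by exact_mod_cast le_top)).contDiffOn
  refine ⟨P_contDiffOn i (hc _), fun j hj x hx => ?_⟩
  refine (dn_P_le i (hc _) (Ho_sub hx)).trans ?_
  rw [dn_eq hx]
  exact hb _ (by omega) x

set_option maxHeartbeats 2000000 in
theorem cattabriga_estimate_uniform
    (ρb μh ph : ℝ) (hρb : 0 < ρb) (hμh : 0 < μh) (hph : 0 < ph)
    (k : ℕ) (hk : k ≤ 4) :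
    ∃ κ C : ℝ, 0 < κ ∧ 0 < C ∧
      ∀ M : E2 → ℝ, ContDiff ℝ (⊤ : ℕ∞) M →
        (∀ j ≤ 9, Integrable fun x' : E2 => ‖iteratedFDeriv ℝ j M x'‖ ^ 2) →
        (∑ j ∈ Finset.range 10, ∫ x' : E2, ‖iteratedFDeriv ℝ j M x'‖ ^ 2) ≤ κ ^ 2 →
        ∀ (u : E3 → E3) (p : E3 → ℝ),
          ContDiffOn ℝ (k + 2) u (closure (Omg M)) →
          ContDiffOn ℝ (k + 1) p (closure (Omg M)) →
          (∀ j ≤ k + 2, IntegrableOn (fun x => ‖iteratedFDeriv ℝ j u x‖ ^ 2) (Omg M)) →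
          (∀ j ≤ k + 1, IntegrableOn (fun x => ‖iteratedFDeriv ℝ j p x‖ ^ 2) (Omg M)) →
          (∀ j ≤ k + 1, IntegrableOn
            (fun x => ‖iteratedFDeriv ℝ j (fun y => ρb * vdiv u y) x‖ ^ 2) (Omg M)) →
          (∀ j ≤ k, IntegrableOn
            (fun x => ‖iteratedFDeriv ℝ j (fun y => -μh • vlap u y + ph • grad p y) x‖ ^ 2)
            (Omg M)) →
          (∀ x' : E2, u (gph M x') = 0) →
          Filter.Tendsto u (Bornology.cobounded E3 ⊓ Filter.principal (closure (Omg M))) (nhds 0) →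
          (∫ x in Omg M, ‖iteratedFDeriv ℝ (k + 2) u x‖ ^ 2) +
              (∫ x in Omg M, ‖iteratedFDeriv ℝ (k + 1) p x‖ ^ 2) ≤
            C * ((∑ j ∈ Finset.range (k + 2),
                ∫ x in Omg M, ‖iteratedFDeriv ℝ j (fun y => ρb * vdiv u y) x‖ ^ 2) +
              (∑ j ∈ Finset.range (k + 1),
                ∫ x in Omg M,
                  ‖iteratedFDeriv ℝ j (fun y => -μh • vlap u y + ph • grad p y) x‖ ^ 2) +
              ∫ x in Omg M, ‖iteratedFDeriv ℝ 1 u x‖ ^ 2) := by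
  obtain ⟨ε, C0, hε, hε1, hC0, H⟩ := pert_est hμh hph k
  set K : ℝ := KK k with hK
  have hKp : 0 < K := KK_pos k
  set C1 : ℝ := C0 * ((k + 1) * ((ρb ^ 2)⁻¹ * K + 3 * K) + 3 * K) with hC1
  have hC1p : 0 < C1 := by positivity
  refine ⟨ε / 20, 10 * K * (k + 3) * C1, by positivity, by positivity, ?_⟩
  intro M hM hMi hMb u p hu hp hui hpi hhi hgi hbd _
  have hu : ContDiffOn ℝ ((k + 2 : ℕ)) u (closure (Omg M)) := by exact_mod_cast hu
  have hp : ContDiffOn ℝ ((k + 1 : ℕ)) p (closure (Omg M)) := by exact_mod_cast hp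
  have hbε : ∀ i ≤ k + 2, ∀ x, ‖iteratedFDeriv ℝ i (Mt M) x‖ ≤ ε := by
    intro i hi x
    refine (Mt_bd hM i x).trans ?_
    have := sob hM (by positivity : 0 < ε / 20) hMi hMb (by omega : i ≤ 7) (pr x)
    linarith
  have hb1 : ∀ n ≤ k + 2, ∀ i ≤ n, ∀ x, ‖iteratedFDeriv ℝ i (Mt M) x‖ ≤ 1 :=
    fun n hn i hi x => (hbε i (hi.trans hn) x).trans hε1
  have hO := Omg_open hM
  have huO : ContDiffOn ℝ ((k + 2 : ℕ)) u (Omg M) := hu.mono subset_closure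
  have hpO : ContDiffOn ℝ ((k + 1 : ℕ)) p (Omg M) := hp.mono subset_closure
  have hucO := fun i => comp_contDiffOn huO i
  have hmap : ∀ y ∈ Ho, Sh (Mt M) y ∈ Omg M := by
    intro y hy; rw [pre1 M] at hy; exact hy
  -- transformed fields
  set v : Fin 3 → E3 → ℝ := fun i => (fun y => u y i) ∘ Sh (Mt M) with hv
  set q : E3 → ℝ := p ∘ Sh (Mt M) with hq
  have hA : Adm k v q := by
    refine ⟨fun i => ?_, ?_, fun i x hx => ?_⟩
    · exact fwdR hM (hb1 (k + 2) le_rfl) (comp_contDiffOn hu i)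
        fun j hj => (comp_int hO huO hj (hui j hj) i).1
    · exact fwdR hM (hb1 (k + 1) (by omega)) hp hpi
    · simp only [hv, Function.comp]
      rw [Sh_gph M hx, hbd]; rfl
  have hm : ∀ j, SmallC (k + 1) ε (mM M j) := fun j => mM_small hM hbε j
  have hest := H (mM M) hm v q hA
  have hB0 := Bk_nonneg k v q
  -- first-order identities
  have hT1 : ∀ i j, ∀ y ∈ Ho, Td (mM M) j (v i) y = pd j (fun z => u z i) (Sh (Mt M) y) :=
    fun i j => chain hM (diffAt hO (n := k + 1) (hucO i)) j
  have hpdO : ∀ i j, ContDiffOn ℝ ((k + 1 : ℕ)) (pd j (fun z => u z i)) (Omg M) :=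
    fun i j => pd_contDiffOn hO (n := k + 1) (hucO i) j
  have hT2 : ∀ i j, ∀ y ∈ Ho, Td (mM M) j (Td (mM M) j (v i)) y =
      pd j (pd j (fun z => u z i)) (Sh (Mt M) y) := by
    intro i j y hy
    rw [Td_congr (hT1 i j) y hy]
    exact chain hM (diffAt hO (n := k) (hpdO i j)) j y hy
  have hT3 : ∀ j, ∀ y ∈ Ho, Td (mM M) j q y = pd j p (Sh (Mt M) y) :=
    fun j => chain hM (diffAt hO (n := k) hpO) j
  -- data
  set h : E3 → ℝ := fun y => ρb * vdiv u y with hh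
  set g : E3 → E3 := fun y => -μh • vlap u y + ph • grad p y with hg
  have hhO : ContDiffOn ℝ ((k + 1 : ℕ)) h (Omg M) := by
    have : ContDiffOn ℝ ((k + 1 : ℕ)) (vdiv u) (Omg M) := by
      unfold vdiv
      exact ContDiffOn.sum fun i _ => hpdO i i
    exact contDiffOn_const.mul this
  have hgi' : ∀ i y, g y i = -μh * (∑ j, pd j (pd j (fun z => u z i)) y) + ph * pd i p y := by
    intro i y
    simp [hg, vlap, grad, vecE3]
  have hgO : ContDiffOn ℝ k g (Omg M) := by
    rw [contDiffOn_euclidean]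
    intro i
    simp only [hgi']
    refine (contDiffOn_const.mul (ContDiffOn.sum fun j _ => ?_)).add (contDiffOn_const.mul ?_)
    · exact pd_contDiffOn hO (n := k) (hpdO i j) j
    · exact pd_contDiffOn hO (n := k) hpO i
  set Hs : ℝ := ∑ j ∈ Finset.range (k + 2), ∫ x in Omg M, ‖iteratedFDeriv ℝ j h x‖ ^ 2 with hHs
  set Gs : ℝ := ∑ j ∈ Finset.range (k + 1), ∫ x in Omg M, ‖iteratedFDeriv ℝ j g x‖ ^ 2 with hGs
  set U1 : ℝ := ∫ x in Omg M, ‖iteratedFDeriv ℝ 1 u x‖ ^ 2 with hU1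
  have hHs0 : 0 ≤ Hs := Finset.sum_nonneg fun _ _ => integral_nonneg fun _ => sq_nonneg _
  have hGs0 : 0 ≤ Gs := Finset.sum_nonneg fun _ _ => integral_nonneg fun _ => sq_nonneg _
  have hU0 : 0 ≤ U1 := integral_nonneg fun _ => sq_nonneg _
  have dF : ∀ n ∈ Finset.range (k + 1), N (n + 1) (FT (mM M) v) ≤ (ρb ^ 2)⁻¹ * K * Hs := by
    intro n hn
    have hn : n ≤ k := by have := Finset.mem_range.1 hn; omega
    have hR : Reg (n + 1) (FT (mM M) v) := by
      refine Reg.sum fun i => ?_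
      exact Reg.Td ((hA.v i).mono (by omega)) (fun i => (hm i).mono (by omega)) i
    have e : N (n + 1) (fun x => ρb * FT (mM M) v x) = N (n + 1) (h ∘ Sh (Mt M)) := by
      refine N_congr fun y hy => ?_
      simp only [hh, Function.comp, vdiv, FT]
      congr 1
      exact Finset.sum_congr rfl fun i _ => hT1 i i y hy
    rw [N_smul _ hR] at e
    have hf := (fwd hM (n := n + 1) (hb1 (n + 1) (by omega))
      (hhO.of_le (by exact_mod_cast (by omega : n + 1 ≤ k + 1)))
      fun j hj => hhi j (by omega)).2
    have hs : ∑ j ∈ Ix (n + 1), ∫ x in Omg M, ‖iteratedFDeriv ℝ j h x‖ ^ 2 ≤ Hs :=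
      Finset.sum_le_sum_of_subset_of_nonneg ((Ix_sub (n + 1)).trans
        (Finset.range_mono (by omega))) fun _ _ _ => integral_nonneg fun _ => sq_nonneg _
    have h2 : ρb ^ 2 * N (n + 1) (FT (mM M) v) ≤ K * Hs := by
      rw [e]
      exact hf.trans (mul_le_mul (Kn_le (by omega)) hs
        (Finset.sum_nonneg fun _ _ => integral_nonneg fun _ => sq_nonneg _) hKp.le)
    rw [mul_assoc, inv_mul_eq_div, le_div_iff₀ (by positivity)]
    linarith
  have dG : ∀ n ∈ Finset.range (k + 1), ∀ i, N n (GT (mM M) μh ph v q i) ≤ K * Gs := by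
    intro n hn i
    have hn : n ≤ k := by have := Finset.mem_range.1 hn; omega
    have e : N n (GT (mM M) μh ph v q i) = N n ((fun y => g y i) ∘ Sh (Mt M)) := by
      refine N_congr fun y hy => ?_
      simp only [Function.comp, hgi', GT]
      rw [hT3 i y hy, Finset.sum_congr rfl fun j _ => hT2 i j y hy]
    rw [e]
    have hf := (fwd hM (n := n) (hb1 n (by omega))
      ((comp_contDiffOn hgO i).of_le (by exact_mod_cast hn))
      fun j hj => (comp_int hO hgO (by omega) (hgi j (by omega)) i).1).2
    refine hf.trans (mul_le_mul (Kn_le (by omega)) ?_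
        (Finset.sum_nonneg fun _ _ => integral_nonneg fun _ => sq_nonneg _) hKp.le)
    refine le_trans (Finset.sum_le_sum fun j hj => ?_)
      (Finset.sum_le_sum_of_subset_of_nonneg ((Ix_sub n).trans
        (Finset.range_mono (by omega))) fun _ _ _ => integral_nonneg fun _ => sq_nonneg _)
    have hj : j ≤ n := by have := Finset.mem_range.1 (Ix_sub n hj); omega
    exact (comp_int hO hgO (by omega) (hgi j (by omega)) i).2
  have dD : DT (mM M) μh ph k v q ≤ (k + 1) * ((ρb ^ 2)⁻¹ * K * Hs + 3 * (K * Gs)) := by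
    unfold DT
    refine (Finset.sum_le_card_nsmul _ _ ((ρb ^ 2)⁻¹ * K * Hs + 3 * (K * Gs)) fun n hn => ?_).trans
      (le_of_eq (by simp; ring))
    refine add_le_add (dF n hn) ?_
    refine (Finset.sum_le_card_nsmul _ _ (K * Gs) fun i _ => dG n hn i).trans (le_of_eq (by simp))
  have dU : ∑ i, N 1 (v i) ≤ 3 * (K * U1) := by
    refine (Finset.sum_le_card_nsmul _ _ (K * U1) fun i _ => ?_).trans (le_of_eq (by simp))
    have hf := (fwd hM (n := 1) (hb1 1 (by omega))
      ((hucO i).of_le (by exact_mod_cast (by omega : 1 ≤ k + 2)))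
      fun j hj => (comp_int hO huO (by omega) (hui j (by omega)) i).1).2
    refine hf.trans (mul_le_mul (Kn_le (by omega)) ?_
        (Finset.sum_nonneg fun _ _ => integral_nonneg fun _ => sq_nonneg _) hKp.le)
    have : Ix 1 = {1} := by simp [Ix]
    rw [this, Finset.sum_singleton]
    exact (comp_int hO huO (by omega) (hui 1 (by omega)) i).2
  have hBk : Bk k v q ≤ C1 * (Hs + Gs + U1) := by
    refine hest.trans ?_
    rw [hC1, mul_assoc]
    refine mul_le_mul_of_nonneg_left ?_ hC0.le
    refine (add_le_add dD dU).trans ?_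
    have a1 : 0 ≤ (ρb ^ 2)⁻¹ * K := by positivity
    have a2 : (0:ℝ) ≤ k + 1 := by positivity
    have t1 : 0 ≤ (k + 1) * (((ρb ^ 2)⁻¹ * K) * (Gs + U1)) := by positivity
    have t2 : 0 ≤ (k + 1) * ((3 * K) * (Hs + U1)) := by positivity
    have t3 : 0 ≤ 3 * K * (Hs + Gs) := by positivity
    nlinarith [t1, t2, t3]
  -- back to the original domain
  have bu : ∫ x in Omg M, ‖iteratedFDeriv ℝ (k + 2) u x‖ ^ 2 ≤ 9 * (K * ((k + 3) * Bk k v q)) := by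
    refine (int_comp hO huO le_rfl (hui _ le_rfl)).trans ?_
    have : ∑ i : Fin 3, ∫ x in Omg M, ‖iteratedFDeriv ℝ (k + 2) (fun y => u y i) x‖ ^ 2 ≤
        3 * (K * ((k + 3) * Bk k v q)) := by
      refine (Finset.sum_le_card_nsmul _ _ (K * ((k + 3) * Bk k v q)) fun i _ => ?_).trans
        (le_of_eq (by simp))
      refine (back hM (hb1 (k + 2) le_rfl) (hA.v i)).trans
        (mul_le_mul (Kn_le le_rfl) ?_ (Finset.sum_nonneg fun _ _ => N_nonneg _ _) hKp.le)
      refine (Finset.sum_le_card_nsmul _ _ (Bk k v q) fun j hj => ?_).trans ?_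
      · simp only [Ix, Finset.mem_Icc] at hj
        exact Nv_le_Bk (by omega) (by omega) v q i
      · rw [nsmul_eq_mul]
        refine mul_le_mul_of_nonneg_right ?_ hB0
        have := Ix_card (k + 2)
        push_cast at this
        linarith
    linarith
  have bp : ∫ x in Omg M, ‖iteratedFDeriv ℝ (k + 1) p x‖ ^ 2 ≤ K * ((k + 3) * Bk k v q) := by
    refine (back hM (hb1 (k + 1) (by omega)) hA.q).trans
      (mul_le_mul (Kn_le (by omega)) ?_ (Finset.sum_nonneg fun _ _ => N_nonneg _ _) hKp.le)
    refine (Finset.sum_le_card_nsmul _ _ (Bk k v q) fun j hj => ?_).trans ?_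
    · simp only [Ix, Finset.mem_Icc] at hj
      exact Nq_le_Bk (by omega) (by omega) v q
    · rw [nsmul_eq_mul]
      refine mul_le_mul_of_nonneg_right ?_ hB0
      have := Ix_card (k + 1)
      push_cast at this
      linarith
  have fin : 10 * K * (k + 3) * Bk k v q ≤ 10 * K * (k + 3) * (C1 * (Hs + Gs + U1)) :=
    mul_le_mul_of_nonneg_left hBk (by positivity)
  linarith
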